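/- arXiv:1805.09689 — 2 statements merged into one kernel-verified Lean document; each statement's English description precedes it below -/
import Mathlib

section
/- The thickness of the complete bipartite graph K_{n,n} equals ⌈(n+2)/4⌉. -/
open SimpleGraph

/-- A simple graph is planar if it admits a drawing in the plane: an injective
placement of vertices and, for each edge, an injective continuous arc joining
the images of its endpoints, such that arcs avoid vertex images in their
interiors and distinct arcs meet only at vertex images. -/
def IsPlanar {V : Type*} (G : SimpleGraph V) : Prop :=
  ∃ (f : V → ℝ × ℝ) (γ : G.edgeSet → (Set.Icc (0:ℝ) 1 → ℝ × ℝ)),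
    Function.Injective f ∧
    (∀ e : G.edgeSet, Continuous (γ e)) ∧
    (∀ e : G.edgeSet, ∃ u v : V, (e : Sym2 V) = s(u, v) ∧
      γ e ⟨0, by norm_num⟩ = f u ∧ γ e ⟨1, by norm_num⟩ = f v) ∧
    (∀ e : G.edgeSet, Function.Injective (γ e)) ∧
    (∀ e : G.edgeSet, ∀ t : Set.Icc (0:ℝ) 1, (t : ℝ) ≠ 0 → (t : ℝ) ≠ 1 →
      ∀ v : V, γ e t ≠ f v) ∧
    (∀ e e' : G.edgeSet, e ≠ e' → ∀ s t : Set.Icc (0:ℝ) 1,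
      γ e s = γ e' t → γ e s ∈ Set.range f)

/-- The thickness of a graph: the least `n` such that `G` is the union of `n`
planar subgraphs. -/
noncomputable def thickness {V : Type*} (G : SimpleGraph V) : ℕ :=
  sInf {n : ℕ | ∃ H : Fin n → SimpleGraph V,
    (∀ i, H i ≤ G) ∧ (∀ i, IsPlanar (H i)) ∧ (⨆ i, H i) = G}

open Complex in
theorem exists_log_global {A : Type*} [TopologicalSpace A] [SimplyConnectedSpace A]
    [LocallyPathConnectedSpace A] (h : A → ℂ) (hc : Continuous h) (h0 : ∀ a, h a ≠ 0) :
    ∃ L : A → ℂ, Continuous L ∧ ∀ a, exp (L a) = h a := by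
  obtain ⟨a₀⟩ : Nonempty A := inferInstance
  obtain ⟨F, ⟨-, hF⟩, -⟩ := isCoveringMapOn_exp.existsUnique_continuousMap_lifts (A := A)
    ⟨h, hc⟩ (a₀ := a₀) (e₀ := log (h a₀)) (exp_log (h0 a₀)) (fun a => h0 a)
  exact ⟨F, F.continuous, fun a => congrFun hF a⟩

open Complex in
theorem exists_log_path (h : Set.Icc (0:ℝ) 1 → ℂ) (hc : Continuous h) (h0 : ∀ a, h a ≠ 0) :
    ∃ L : Set.Icc (0:ℝ) 1 → ℂ, Continuous L ∧ ∀ a, exp (L a) = h a := by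
  obtain ⟨L, hL, hL'⟩ := exists_log_global (A := ℝ)
    (fun t => h (Set.projIcc 0 1 zero_le_one t)) (hc.comp continuous_projIcc) (fun _ => h0 _)
  refine ⟨fun t => L t, hL.comp continuous_subtype_val, fun t => ?_⟩
  rw [hL', Set.projIcc_val]

abbrev I01 := Set.Icc (0:ℝ) 1

/-- the ratio of end values of a square root along the path. -/
noncomputable def half (γ : I01 → ℂ) (p : ℂ) : ℂ :=
  open Classical in
  if h : ∃ s : I01 → ℂ, Continuous s ∧ ∀ t, s t ^ 2 = γ t - p then h.choose 1 / h.choose 0 else 1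

theorem half_eq {γ : I01 → ℂ} {p : ℂ} (hp : p ∉ Set.range γ) {s : I01 → ℂ}
    (hs : Continuous s) (hs2 : ∀ t, s t ^ 2 = γ t - p) : half γ p = s 1 / s 0 := by
  have hex : ∃ s : I01 → ℂ, Continuous s ∧ ∀ t, s t ^ 2 = γ t - p := ⟨s, hs, hs2⟩
  rw [half, dif_pos hex]
  obtain ⟨h1, h2⟩ := hex.choose_spec
  have hne : ∀ t, s t ≠ 0 := fun t h => hp ⟨t, by
    have := hs2 t; rw [h] at this; simpa [eq_comm, sub_eq_zero] using this⟩
  rcases (isPreconnected_univ (α := I01)).eq_or_eq_neg_of_sq_eq h1.continuousOn hs.continuousOn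
    (fun t _ => (h2 t).trans (hs2 t).symm) (fun {t} _ => hne t) with h | h
  · rw [h (Set.mem_univ _), h (Set.mem_univ _)]
  · rw [h (Set.mem_univ _), h (Set.mem_univ _)]; simp

open Complex in
theorem exists_sqrt_path {γ : I01 → ℂ} (hγ : Continuous γ) {p : ℂ} (hp : p ∉ Set.range γ) :
    ∃ s : I01 → ℂ, Continuous s ∧ ∀ t, s t ^ 2 = γ t - p := by
  obtain ⟨L, hL, hL'⟩ := exists_log_path (fun t => γ t - p) (by fun_prop)
    (fun t h => hp ⟨t, sub_eq_zero.1 h⟩)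
  refine ⟨fun t => exp (L t / 2), by fun_prop, fun t => ?_⟩
  rw [← exp_nat_mul, ← hL']; congr 1; push_cast; ring

theorem half_sq {γ : I01 → ℂ} (hγ : Continuous γ) {p : ℂ} (hp : p ∉ Set.range γ) :
    half γ p ^ 2 = (γ 1 - p) / (γ 0 - p) := by
  obtain ⟨s, hs, hs2⟩ := exists_sqrt_path hγ hp
  rw [half_eq hp hs hs2, div_pow, hs2, hs2]

theorem half_ne {γ : I01 → ℂ} (hγ : Continuous γ) {p : ℂ} (hp : p ∉ Set.range γ) :
    half γ p ≠ 0 := by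
  intro h
  have := half_sq hγ hp
  rw [h] at this
  have h1 : γ 1 - p ≠ 0 := fun h => hp ⟨1, sub_eq_zero.1 h⟩
  have h0 : γ 0 - p ≠ 0 := fun h => hp ⟨0, sub_eq_zero.1 h⟩
  have := div_ne_zero h1 h0
  simp_all

open Complex in
theorem half_cont {γ : I01 → ℂ} (hγ : Continuous γ) :
    ContinuousOn (half γ) (Set.range γ)ᶜ := by
  intro p hp
  have hp' : p ∉ Set.range γ := hp
  obtain ⟨s, hs, hs2⟩ := exists_sqrt_path hγ hp'
  have hcl : IsClosed (Set.range γ) := (isCompact_range hγ).isClosed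
  obtain ⟨r, hr, hball⟩ := Metric.isOpen_iff.1 hcl.isOpen_compl p hp
  have hd : ∀ t, r ≤ ‖γ t - p‖ := by
    intro t
    by_contra hlt
    push Not at hlt
    exact hball (a := γ t) (by rwa [Metric.mem_ball, dist_eq_norm]) ⟨t, rfl⟩
  have hne : ∀ t, γ t - p ≠ 0 := fun t => by
    rw [← norm_pos_iff]; exact hr.trans_le (hd t)
  have hslit : ∀ q ∈ Metric.ball p r, ∀ t, (γ t - q) / (γ t - p) ∈ slitPlane := by
    intro q hq t
    have : (γ t - q) / (γ t - p) = 1 + (p - q) / (γ t - p) := by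
      field_simp [hne t]; ring
    rw [this]
    apply mem_slitPlane_of_norm_lt_one
    rw [norm_div, div_lt_one (norm_pos_iff.2 (hne t))]
    rw [Metric.mem_ball, dist_eq_norm, norm_sub_rev] at hq
    exact hq.trans_le (hd t)
  have key : ∀ q ∈ Metric.ball p r, half γ q =
      (s 1 * exp (log ((γ 1 - q) / (γ 1 - p)) / 2)) /
        (s 0 * exp (log ((γ 0 - q) / (γ 0 - p)) / 2)) := by
    intro q hq
    refine half_eq (hball hq) (s := fun t => s t * exp (log ((γ t - q) / (γ t - p)) / 2)) ?_ ?_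
    · have : Continuous fun t => log ((γ t - q) / (γ t - p)) :=
        Continuous.clog ((hγ.sub continuous_const).div (hγ.sub continuous_const) hne)
          (hslit q hq)
      fun_prop
    · intro t
      rw [mul_pow, hs2, ← exp_nat_mul]
      have : (↑(2:ℕ) : ℂ) * (log ((γ t - q) / (γ t - p)) / 2) = log ((γ t - q) / (γ t - p)) := by
        push_cast; ring
      rw [this, exp_log (slitPlane_ne_zero (hslit q hq t))]
      field_simp [hne t]
  have hs0 : s 0 ≠ 0 := fun h => hne 0 (by rw [← hs2, h]; simp)
  have hcont : ∀ t : I01, ContinuousAt (fun q => log ((γ t - q) / (γ t - p))) p := by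
    intro t
    apply ContinuousAt.clog
    · fun_prop
    · exact hslit p (Metric.mem_ball_self hr) t
  have : ContinuousAt (half γ) p := by
    have h1 := hcont 1
    have h0 := hcont 0
    refine ContinuousAt.congr (f := fun q => (s 1 * exp (log ((γ 1 - q) / (γ 1 - p)) / 2)) /
        (s 0 * exp (log ((γ 0 - q) / (γ 0 - p)) / 2))) ?_ ?_
    · refine ContinuousAt.div (by fun_prop) (by fun_prop) (mul_ne_zero hs0 (exp_ne_zero _))
    · filter_upwards [Metric.ball_mem_nhds p hr] with q hq using (key q hq).symm
  exact this.continuousWithinAt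

open Complex in
theorem no_sqrt {a b : ℂ} (hab : a ≠ b) (s : ℂ → ℂ) (hs : ContinuousOn s {a, b}ᶜ)
    (hs2 : ∀ p, p ≠ a → p ≠ b → s p ^ 2 = (b - p) / (a - p)) : False := by
  set d := b - a with hd
  have hd0 : d ≠ 0 := sub_ne_zero.2 hab.symm
  let P : ℝ → ℂ := fun θ => a + d / 2 * exp (θ * I)
  have hnorm : ∀ θ : ℝ, ‖exp (θ * I)‖ = 1 := fun θ => norm_exp_ofReal_mul_I θ
  have hPa : ∀ θ, P θ ≠ a := by
    intro θ h
    have : d / 2 * exp (θ * I) = 0 := by simpa [P] using h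
    simp [hd0] at this
  have hPb : ∀ θ, P θ ≠ b := by
    intro θ h
    have : d / 2 * exp (θ * I) = d := by rw [eq_sub_iff_add_eq'.2 h]
    have h2 := congrArg norm this
    rw [norm_mul, hnorm, norm_div] at h2
    have := norm_pos_iff.2 hd0
    simp at h2
    linarith
  have hslit : ∀ θ : ℝ, (1 + (-(exp (θ * I) / 2)) : ℂ) ∈ slitPlane := by
    intro θ
    apply mem_slitPlane_of_norm_lt_one
    rw [norm_neg, norm_div, hnorm]; norm_num
  let q : ℝ → ℂ := fun θ => exp (log (1 + (-(exp (θ * I) / 2)) : ℂ) / 2)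
  have hq : Continuous q := by
    have : Continuous fun θ : ℝ => log (1 + (-(exp (θ * I) / 2)) : ℂ) :=
      Continuous.clog (by fun_prop) hslit
    fun_prop
  have hq2 : ∀ θ, q θ ^ 2 = 1 - exp (θ * I) / 2 := by
    intro θ
    simp only [q]
    rw [← exp_nat_mul]
    have h : ∀ x : ℂ, (↑(2:ℕ) : ℂ) * (x / 2) = x := fun x => by push_cast; ring
    rw [h, exp_log (slitPlane_ne_zero (hslit θ))]; ring
  have hqne : ∀ θ, q θ ≠ 0 := fun θ => exp_ne_zero _
  let φ : ℝ → ℂ := fun θ => s (P θ) * exp (θ * I / 2) / q θ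
  have hφ : Continuous φ := by
    have h1 : Continuous fun θ => s (P θ) := by
      apply hs.comp_continuous (by fun_prop)
      intro θ
      simp [hPa, hPb]
    exact (h1.mul (by fun_prop)).div hq hqne
  have hφ2 : ∀ θ, φ θ ^ 2 = -2 := by
    intro θ
    simp only [φ]
    rw [div_pow, mul_pow, hs2 _ (hPa θ) (hPb θ), hq2, ← exp_nat_mul]
    have h : (↑(2:ℕ) : ℂ) * (θ * I / 2) = θ * I := by push_cast; ring
    rw [h]
    have h1 : b - P θ = d * (1 - exp (θ * I) / 2) := by simp [P, hd]; ring
    have h2 : a - P θ = - (d * exp (θ * I) / 2) := by simp [P]; ring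
    have h3 : (1 - exp (θ * I) / 2) ≠ 0 := by rw [← hq2]; exact pow_ne_zero _ (hqne θ)
    have h4 := exp_ne_zero (θ * I)
    rw [h1, h2]
    generalize exp (θ * I) = E at *
    generalize hX : 1 - E / 2 = X at *
    field_simp
  have hconst := (isPreconnected_univ (α := ℝ)).eq_of_sq_eq (f := φ) (g := fun _ => φ 0)
    hφ.continuousOn continuousOn_const (fun θ _ => by simp [hφ2])
    (fun {θ} _ h => by have := hφ2 0; rw [h] at this; norm_num at this) (Set.mem_univ 0) rfl
  have h2π : φ (2 * Real.pi) = φ 0 := hconst (Set.mem_univ _)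
  have hneg : φ (2 * Real.pi) = - φ 0 := by
    have e1 : exp (((2 * Real.pi : ℝ) : ℂ) * I) = 1 := by push_cast; exact exp_two_pi_mul_I
    have e2 : exp (((2 * Real.pi : ℝ) : ℂ) * I / 2) = -1 := by
      push_cast
      rw [show (2 * (Real.pi : ℂ) * I / 2) = Real.pi * I by ring]; exact exp_pi_mul_I
    simp only [φ, q, P, e1, e2]
    simp
    ring
  have h0 : φ 0 = 0 := by
    have : φ 0 = - φ 0 := h2π.symm.trans hneg
    linear_combination this / 2
  have := hφ2 0
  rw [h0] at this; norm_num at this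

open Complex in
/-- If the frontier of `F` is in the compact `K`, `p` inside and `q` outside, then there is no
logarithm of `(z-p)/(z-q)` on `K`. -/
theorem no_log {K F : Set ℂ} (hK : IsCompact K) (hF : frontier F ⊆ K) {p q : ℂ}
    (hp : p ∈ F) (hq : q ∉ F) (hpK : p ∉ K) (hqK : q ∉ K) (g : ℂ → ℂ) (hg : ContinuousOn g K)
    (hg' : ∀ z ∈ K, exp (g z) = (z - p) / (z - q)) : False := by
  classical
  obtain ⟨R₀, hR₀⟩ := hK.isBounded.subset_closedBall q
  set R : ℝ := max (R₀ + 1) (‖p - q‖ + 1) with hR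
  have hRp : ‖p - q‖ < R := lt_of_lt_of_le (by linarith) (le_max_right _ _)
  have hRK : ∀ z ∈ K, ‖z - q‖ < R := fun z hz => by
    have := hR₀ hz
    rw [Metric.mem_closedBall, dist_eq_norm] at this
    exact lt_of_lt_of_le (by linarith) (le_max_left _ _)
  have hR0 : 0 < R := (norm_nonneg _).trans_lt hRp
  let Out : Set ℂ := {z | R ≤ ‖z - q‖}
  have hOut : IsClosed Out := isClosed_le continuous_const (by fun_prop)
  have hne : ∀ z ∈ Out, z - q ≠ 0 := fun z hz => norm_pos_iff.1 (hR0.trans_le hz)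
  have hslit : ∀ z ∈ Out, (z - p) / (z - q) ∈ slitPlane := by
    intro z hz
    have h0 := hne z hz
    have : (z - p) / (z - q) = 1 + (q - p) / (z - q) := by field_simp; ring
    rw [this]
    apply mem_slitPlane_of_norm_lt_one
    rw [norm_div, div_lt_one (norm_pos_iff.2 h0), norm_sub_rev]
    exact hRp.trans_le hz
  let g₁ : ℂ → ℂ := fun z => if z ∈ K then g z else log ((z - p) / (z - q))
  have hg₁ : ContinuousOn g₁ (K ∪ Out) := by
    apply ContinuousOn.union_of_isClosed _ _ hK.isClosed hOut
    · exact hg.congr (fun z hz => by simp [g₁, hz])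
    · refine ContinuousOn.congr (f := fun z => log ((z - p) / (z - q))) ?_ ?_
      · apply ContinuousOn.clog _ hslit
        exact ContinuousOn.div (by fun_prop) (by fun_prop) hne
      · intro z hz
        have : z ∉ K := fun h => absurd (hRK z h) (not_lt.2 hz)
        simp [g₁, this]
  have hg₁' : ∀ z ∈ K ∪ Out, exp (g₁ z) = (z - p) / (z - q) := by
    intro z hz
    by_cases h : z ∈ K
    · simp [g₁, h, hg' z h]
    · have hz' : z ∈ Out := hz.resolve_left h
      simp only [g₁, h, if_false]
      exact exp_log (slitPlane_ne_zero (hslit z hz'))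
  obtain ⟨G, hG⟩ := ContinuousMap.exists_restrict_eq (hK.isClosed.union hOut)
    (⟨(K ∪ Out).domRestrict g₁, hg₁.domRestrict⟩ : C((K ∪ Out : Set ℂ), ℂ))
  have hGe : ∀ z ∈ K ∪ Out, exp (G z) = (z - p) / (z - q) := by
    intro z hz
    have := DFunLike.congr_fun hG ⟨z, hz⟩
    have h2 : G z = g₁ z := this
    rw [h2, hg₁' z hz]
  let h : ℂ → ℂ := fun z => if z ∈ F then exp (G z) * (z - q) else z - p
  have hqne : ∀ z ∈ K ∪ Out, z - q ≠ 0 := by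
    rintro z (hz | hz)
    · intro h; rw [sub_eq_zero.1 h] at hz; exact hqK hz
    · exact hne z hz
  have hc : Continuous h := by
    refine Continuous.if ?_ (by fun_prop) (by fun_prop)
    intro z hz
    have hz' : z ∈ K ∪ Out := Or.inl (hF hz)
    rw [hGe z hz']
    field_simp [hqne z hz']
  have h0 : ∀ z, h z ≠ 0 := by
    intro z
    by_cases hz : z ∈ F
    · simp only [h, hz, if_true]
      refine mul_ne_zero (exp_ne_zero _) (sub_ne_zero.2 ?_)
      rintro rfl; exact hq hz
    · simp only [h, hz, if_false]
      refine sub_ne_zero.2 ?_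
      rintro rfl; exact hz hp
  have hOutv : ∀ z ∈ Out, h z = z - p := by
    intro z hz
    by_cases hzF : z ∈ F
    · simp only [h, hzF, if_true]
      rw [hGe z (Or.inr hz)]; field_simp [hne z hz]
    · simp only [h, hzF, if_false]
  obtain ⟨L, hL, hL'⟩ := exists_log_global h hc h0
  -- square root of `z - p` on a big circle
  set ρ : ℝ := R + ‖p - q‖ with hρ
  have hρ0 : 0 < ρ := by have := norm_nonneg (p - q); linarith
  let P : ℝ → ℂ := fun θ => p + ρ * exp (θ * I)
  have hP : ∀ θ, P θ ∈ Out := by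
    intro θ
    show R ≤ ‖P θ - q‖
    have e : P θ - q = ρ * exp (θ * I) - (q - p) := by simp [P]; ring
    rw [e]
    have := norm_sub_norm_le (ρ * exp (θ * I) : ℂ) (q - p)
    rw [norm_mul, norm_exp_ofReal_mul_I, norm_real, Real.norm_of_nonneg hρ0.le,
      norm_sub_rev q p] at this
    linarith
  let φ : ℝ → ℂ := fun θ => exp (L (P θ) / 2) / exp (θ * I / 2)
  have hφ : Continuous φ := by
    refine Continuous.div (by fun_prop) (by fun_prop) (fun _ => exp_ne_zero _)
  have hφ2 : ∀ θ, φ θ ^ 2 = ρ := by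
    intro θ
    have h : ∀ x : ℂ, (↑(2:ℕ) : ℂ) * (x / 2) = x := fun x => by push_cast; ring
    simp only [φ]
    rw [div_pow, ← exp_nat_mul, ← exp_nat_mul, h, h, hL', hOutv _ (hP θ)]
    simp only [P]
    field_simp [exp_ne_zero]
    ring
  have hρc : (ρ : ℂ) ≠ 0 := by exact_mod_cast hρ0.ne'
  have hconst := (isPreconnected_univ (α := ℝ)).eq_of_sq_eq (f := φ) (g := fun _ => φ 0)
    hφ.continuousOn continuousOn_const (fun θ _ => by simp [hφ2])
    (fun {θ} _ h => by have := hφ2 0; rw [h] at this; simp at this; exact hρc this.symm)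
    (Set.mem_univ 0) rfl
  have h2π : φ (2 * Real.pi) = φ 0 := hconst (Set.mem_univ _)
  have hneg : φ (2 * Real.pi) = - φ 0 := by
    have e1 : exp (((2 * Real.pi : ℝ) : ℂ) * I) = 1 := by push_cast; exact exp_two_pi_mul_I
    have e2 : exp (((2 * Real.pi : ℝ) : ℂ) * I / 2) = -1 := by
      push_cast
      rw [show (2 * (Real.pi : ℂ) * I / 2) = Real.pi * I by ring]; exact exp_pi_mul_I
    simp only [φ, P, e1, e2]
    simp
    ring
  have h0 : φ 0 = 0 := by
    have : φ 0 = - φ 0 := h2π.symm.trans hneg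
    linear_combination this / 2
  have := hφ2 0
  rw [h0] at this; simp at this
  exact hρc this.symm


structure Drw (V E : Type*) where
  f : V → ℂ
  γ : E → I01 → ℂ
  src : E → V
  tgt : E → V
  f_inj : Function.Injective f
  γ_cont : ∀ e, Continuous (γ e)
  γ_inj : ∀ e, Function.Injective (γ e)
  γ0 : ∀ e, γ e 0 = f (src e)
  γ1 : ∀ e, γ e 1 = f (tgt e)
  avoid : ∀ e (t : I01), t ≠ 0 → t ≠ 1 → ∀ v, γ e t ≠ f v
  cross : ∀ e e', e ≠ e' → ∀ s t, γ e s = γ e' t → γ e s ∈ Set.range f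

namespace Drw

variable {V E : Type*} (D : Drw V E)

/-- the point set of the drawing of the edges in `S` together with all the vertices -/
def pts (S : Set E) : Set ℂ := Set.range D.f ∪ ⋃ e ∈ S, Set.range (D.γ e)

theorem pts_compact [Finite V] [Finite E] (S : Set E) : IsCompact (D.pts S) :=
  (Set.finite_range D.f).isCompact.union
    (S.toFinite.isCompact_biUnion fun e _ => isCompact_range (D.γ_cont e))

theorem pts_mono {S T : Set E} (h : S ⊆ T) : D.pts S ⊆ D.pts T :=
  Set.union_subset_union_right _ (Set.biUnion_subset_biUnion_left h)

theorem vert_mem (S : Set E) (v : V) : D.f v ∈ D.pts S := Or.inl ⟨v, rfl⟩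

theorem edge_mem {S : Set E} {e : E} (he : e ∈ S) (t : I01) : D.γ e t ∈ D.pts S :=
  Or.inr (Set.mem_biUnion he ⟨t, rfl⟩)

theorem not_edge {S : Set E} {e : E} (he : e ∈ S) {p : ℂ} (hp : p ∉ D.pts S) :
    p ∉ Set.range (D.γ e) := by
  rintro ⟨t, rfl⟩; exact hp (D.edge_mem he t)

theorem not_vert {S : Set E} {p : ℂ} (hp : p ∉ D.pts S) (v : V) : D.f v - p ≠ 0 := by
  intro h; rw [← sub_eq_zero.1 h] at hp; exact hp (D.vert_mem S v)

theorem src_ne_tgt (e : E) : D.src e ≠ D.tgt e := by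
  intro h
  have : D.γ e 0 = D.γ e 1 := by rw [D.γ0, D.γ1, h]
  have := D.γ_inj e this
  simp at this

noncomputable def sig (v : V) (p : ℂ) : ℂ := Complex.exp (Complex.log (D.f v - p) / 2)

theorem sig_sq {v : V} {p : ℂ} (h : D.f v - p ≠ 0) : D.sig v p ^ 2 = D.f v - p := by
  rw [sig, ← Complex.exp_nat_mul]
  have h' : ∀ x : ℂ, (↑(2:ℕ) : ℂ) * (x / 2) = x := fun x => by push_cast; ring
  rw [h', Complex.exp_log h]

theorem sig_ne (v : V) (p : ℂ) : D.sig v p ≠ 0 := Complex.exp_ne_zero _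

noncomputable def sg (a : ZMod 2) : ℂ := if a = 0 then 1 else -1

theorem zmod2 (a : ZMod 2) : a = 0 ∨ a = 1 := by revert a; decide

theorem sg_zero : sg 0 = 1 := by simp [sg]
theorem sg_one : sg 1 = -1 := by simp [sg]

theorem sg_add (a b : ZMod 2) : sg (a + b) = sg a * sg b := by
  have h11 : (1 + 1 : ZMod 2) = 0 := by decide
  rcases zmod2 a with rfl | rfl <;> rcases zmod2 b with rfl | rfl <;>
    simp [sg_zero, sg_one, h11]

theorem sg_sq (a : ZMod 2) : sg a ^ 2 = 1 := by
  rcases zmod2 a with rfl | rfl <;> simp [sg_zero, sg_one]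

theorem sg_ne (a : ZMod 2) : sg a ≠ 0 := by
  rcases zmod2 a with rfl | rfl <;> simp [sg_zero, sg_one]

theorem sg_inj {a b : ZMod 2} (h : sg a = sg b) : a = b := by
  rcases zmod2 a with rfl | rfl <;> rcases zmod2 b with rfl | rfl <;>
    simp [sg_zero, sg_one] at * <;> norm_num at h

theorem sg_sum {ι : Type*} (s : Finset ι) (g : ι → ZMod 2) :
    sg (∑ i ∈ s, g i) = ∏ i ∈ s, sg (g i) := by
  classical
  induction s using Finset.induction_on with
  | empty => simp [sg_zero]
  | insert a s ha ih => rw [Finset.sum_insert ha, Finset.prod_insert ha, sg_add, ih]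

open Classical in
noncomputable def nu (e : E) (p : ℂ) : ZMod 2 :=
  if half (D.γ e) p * D.sig (D.src e) p = D.sig (D.tgt e) p then 0 else 1

theorem half_sign {e : E} {p : ℂ} (hp : p ∉ Set.range (D.γ e)) :
    half (D.γ e) p * D.sig (D.src e) p = sg (D.nu e p) * D.sig (D.tgt e) p := by
  by_cases h : half (D.γ e) p * D.sig (D.src e) p = D.sig (D.tgt e) p
  · rw [nu, if_pos h, sg_zero, one_mul, h]
  · rw [nu, if_neg h, sg_one]
    have h0 : D.f (D.src e) - p ≠ 0 := fun h => hp ⟨0, by rw [D.γ0]; exact sub_eq_zero.1 h⟩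
    have h1 : D.f (D.tgt e) - p ≠ 0 := fun h => hp ⟨1, by rw [D.γ1]; exact sub_eq_zero.1 h⟩
    have : (half (D.γ e) p * D.sig (D.src e) p) ^ 2 = D.sig (D.tgt e) p ^ 2 := by
      rw [mul_pow, half_sq (D.γ_cont e) hp, D.sig_sq h0, D.sig_sq h1, D.γ0, D.γ1]
      field_simp
    rcases sq_eq_sq_iff_eq_or_eq_neg.1 this with h' | h'
    · exact absurd h' h
    · rw [h']; ring

set_option linter.unusedSectionVars false
set_option linter.unusedDecidableInType false
set_option linter.unusedFintypeInType false

variable [Fintype V] [Fintype E] [DecidableEq V]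

noncomputable def bd : (E → ZMod 2) →ₗ[ZMod 2] (V → ZMod 2) where
  toFun z v := ∑ e, z e * ((if D.src e = v then 1 else 0) + (if D.tgt e = v then 1 else 0))
  map_add' x y := by
    ext v; simp [add_mul, Finset.sum_add_distrib]
  map_smul' c x := by
    ext v; simp [Finset.mul_sum, mul_assoc]

theorem bd_apply (z : E → ZMod 2) (v : V) : D.bd z v =
    ∑ e, z e * ((if D.src e = v then 1 else 0) + (if D.tgt e = v then 1 else 0)) := rfl

theorem finrank_ker [Nonempty V] :
    Fintype.card E + 1 ≤ Module.finrank (ZMod 2) (LinearMap.ker D.bd) + Fintype.card V := by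
  have h1 := LinearMap.finrank_range_add_finrank_ker D.bd
  rw [Module.finrank_fintype_fun_eq_card] at h1
  let tot : (V → ZMod 2) →ₗ[ZMod 2] ZMod 2 := ∑ v, LinearMap.proj v
  have htot : ∀ x, tot x = ∑ v, x v := fun x => by simp [tot]
  have hle : LinearMap.range D.bd ≤ LinearMap.ker tot := by
    rintro _ ⟨z, rfl⟩
    rw [LinearMap.mem_ker, htot]
    simp only [bd_apply]
    rw [Finset.sum_comm]
    apply Finset.sum_eq_zero
    intro e _
    rw [← Finset.mul_sum, Finset.sum_add_distrib]
    simp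
    right; decide
  have h2 := Submodule.finrank_mono hle
  have h3 := LinearMap.finrank_range_add_finrank_ker tot
  rw [Module.finrank_fintype_fun_eq_card] at h3
  have hsurj : LinearMap.range tot = ⊤ := by
    rw [LinearMap.range_eq_top]
    intro c
    obtain ⟨v⟩ := ‹Nonempty V›
    exact ⟨Pi.single v c, by simp [htot]⟩
  rw [hsurj, finrank_top, Module.finrank_self] at h3
  omega

open Classical in
noncomputable def supp (z : E → ZMod 2) : Finset E := Finset.univ.filter fun e => z e ≠ 0

theorem mem_supp {z : E → ZMod 2} {e : E} : e ∈ supp z ↔ z e ≠ 0 := by simp [supp]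

theorem sum_supp {M : Type*} [AddCommMonoid M] [Module (ZMod 2) M] (z : E → ZMod 2) (g : E → M) :
    ∑ e, z e • g e = ∑ e ∈ supp z, g e := by
  classical
  rw [supp, Finset.sum_filter]
  refine Finset.sum_congr rfl fun e _ => ?_
  rcases zmod2 (z e) with h | h <;> simp [h]

noncomputable def deg (z : E → ZMod 2) (v : V) : ℕ :=
  ∑ e ∈ supp z, ((if D.src e = v then 1 else 0) + (if D.tgt e = v then 1 else 0))

theorem deg_even {z : E → ZMod 2} (hz : D.bd z = 0) (v : V) : D.deg z v = 2 * (D.deg z v / 2) := by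
  have h : ((D.deg z v : ℕ) : ZMod 2) = 0 := by
    have hv : D.bd z v = 0 := congrFun hz v
    rw [← hv, bd_apply]
    have := sum_supp z fun e => ((if D.src e = v then 1 else 0) + (if D.tgt e = v then 1 else 0) : ZMod 2)
    simp only [smul_eq_mul] at this
    rw [this, deg]
    push_cast
    rfl
  rw [ZMod.natCast_eq_zero_iff] at h
  omega

noncomputable def R (z : E → ZMod 2) (p : ℂ) : ℂ := ∏ v, (D.f v - p) ^ (D.deg z v / 2)

theorem R_cont (z : E → ZMod 2) : Continuous (D.R z) := by unfold R; fun_prop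

theorem prod_sig (z : E → ZMod 2) (g : V → ℂ) :
    ∏ e ∈ supp z, (g (D.src e) * g (D.tgt e)) = ∏ v, g v ^ D.deg z v := by
  simp only [deg, ← Finset.prod_pow_eq_pow_sum]
  rw [Finset.prod_comm]
  refine Finset.prod_congr rfl fun e _ => ?_
  simp only [pow_add, Finset.prod_mul_distrib, pow_ite, pow_one, pow_zero]
  simp

noncomputable def pr (S : Finset E) (p : ℂ) : ℂ := ∏ e ∈ S, (half (D.γ e) p * (D.f (D.src e) - p))

noncomputable def W (p : ℂ) : (E → ZMod 2) →ₗ[ZMod 2] ZMod 2 := ∑ e, D.nu e p • LinearMap.proj e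

theorem W_apply (p : ℂ) (z : E → ZMod 2) : D.W p z = ∑ e ∈ supp z, D.nu e p := by
  rw [← sum_supp z]; simp [W, mul_comm]

theorem key {z : E → ZMod 2} (hz : D.bd z = 0) {p : ℂ} (hp : p ∉ D.pts (supp z : Set E)) :
    D.pr (supp z) p = sg (D.W p z) * D.R z p := by
  have hR : D.R z p = ∏ e ∈ supp z, (D.sig (D.src e) p * D.sig (D.tgt e) p) := by
    rw [D.prod_sig z (fun v => D.sig v p), R]
    refine Finset.prod_congr rfl fun v _ => ?_
    conv_rhs => rw [D.deg_even hz v, pow_mul, D.sig_sq (D.not_vert hp v)]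
  rw [hR, W_apply, sg_sum, ← Finset.prod_mul_distrib, pr]
  refine Finset.prod_congr rfl fun e he => ?_
  rw [← D.sig_sq (D.not_vert hp (D.src e))]
  have := D.half_sign (D.not_edge (S := (supp z : Set E)) (by exact_mod_cast he) hp)
  linear_combination D.sig (D.src e) p * this

theorem R_sq {z : E → ZMod 2} (hz : D.bd z = 0) (p : ℂ) :
    D.R z p ^ 2 = ∏ e ∈ supp z, ((D.f (D.src e) - p) * (D.f (D.tgt e) - p)) := by
  rw [D.prod_sig z (fun v => D.f v - p), R, ← Finset.prod_pow]
  refine Finset.prod_congr rfl fun v _ => ?_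
  conv_rhs => rw [D.deg_even hz v]
  rw [mul_comm, pow_mul]

theorem pr_cont (S : Finset E) : ContinuousOn (D.pr S) (D.pts (S : Set E))ᶜ := by
  unfold pr
  refine continuousOn_finsetProd _ fun e he => ContinuousOn.mul ?_ (by fun_prop)
  exact (half_cont (D.γ_cont e)).mono fun p hp => D.not_edge (by exact_mod_cast he) hp

theorem pr_sq (S : Finset E) {p : ℂ} (hp : p ∉ D.pts (S : Set E)) :
    D.pr S p ^ 2 = ∏ e ∈ S, ((D.f (D.src e) - p) * (D.f (D.tgt e) - p)) := by
  rw [pr, ← Finset.prod_pow]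
  refine Finset.prod_congr rfl fun e he => ?_
  rw [mul_pow, half_sq (D.γ_cont e) (D.not_edge (S := (S : Set E)) (by exact_mod_cast he) hp),
    D.γ0, D.γ1]
  have := D.not_vert hp (D.src e)
  field_simp

theorem R_ne (z : E → ZMod 2) {S : Set E} {p : ℂ} (hp : p ∉ D.pts S) : D.R z p ≠ 0 :=
  Finset.prod_ne_zero_iff.2 fun v _ => pow_ne_zero _ (D.not_vert hp v)

theorem pr_ne (S : Finset E) {p : ℂ} (hp : p ∉ D.pts (S : Set E)) : D.pr S p ≠ 0 :=
  Finset.prod_ne_zero_iff.2 fun e he => mul_ne_zero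
    (half_ne (D.γ_cont e) (D.not_edge (S := (S : Set E)) (by exact_mod_cast he) hp))
    (D.not_vert hp _)

theorem sgW_cont {z : E → ZMod 2} (hz : D.bd z = 0) :
    ContinuousOn (fun p => sg (D.W p z)) (D.pts (supp z : Set E))ᶜ := by
  refine ContinuousOn.congr (f := fun p => D.pr (supp z) p / D.R z p) ?_ ?_
  · exact (D.pr_cont _).div (D.R_cont z).continuousOn fun p hp => D.R_ne z hp
  · intro p hp
    simp only
    rw [D.key hz hp]
    field_simp [D.R_ne z hp]

theorem W_const {z : E → ZMod 2} (hz : D.bd z = 0) {N : Set ℂ} (hN : IsPreconnected N)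
    (hd : N ⊆ (D.pts (supp z : Set E))ᶜ) {p q : ℂ} (hp : p ∈ N) (hq : q ∈ N) :
    D.W p z = D.W q z := by
  apply sg_inj
  exact hN.eq_of_sq_eq (f := fun p => sg (D.W p z)) (g := fun _ => sg (D.W q z))
    ((D.sgW_cont hz).mono hd) continuousOn_const (fun p _ => by simp [sg_sq])
    (fun _ => sg_ne _) hq rfl hp

theorem inter_vert (e : E) {S : Set E} (he : e ∉ S) {p : ℂ} (hp : p ∈ Set.range (D.γ e))
    (hpS : p ∈ D.pts S) : p = D.f (D.src e) ∨ p = D.f (D.tgt e) := by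
  obtain ⟨t, rfl⟩ := hp
  have hv : D.γ e t ∈ Set.range D.f := by
    rcases hpS with h | h
    · exact h
    · simp only [Set.mem_iUnion] at h
      obtain ⟨e', he', s, hs⟩ := h
      exact D.cross e e' (by rintro rfl; exact he he') t s hs.symm
  obtain ⟨v, hv⟩ := hv
  by_cases h0 : t = 0
  · left; rw [h0, D.γ0]
  by_cases h1 : t = 1
  · right; rw [h1, D.γ1]
  exact absurd hv.symm (D.avoid e t h0 h1 v)

/-- Separation: the functionals `W p` distinguish nonzero cycles from constants. -/
theorem sep {z : E → ZMod 2} (hz : D.bd z = 0) (c : ZMod 2)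
    (hc : ∀ p, p ∉ D.pts Set.univ → D.W p z = c) : z = 0 := by
  classical
  by_contra hne
  obtain ⟨e, he⟩ : ∃ e, z e ≠ 0 := by
    by_contra h; push Not at h; exact hne (funext h)
  have hes : e ∈ supp z := mem_supp.2 he
  set S := (supp z).erase e with hS
  have heS : e ∉ (S : Set E) := by simp [hS]
  set a := D.f (D.src e) with ha
  set b := D.f (D.tgt e) with hb
  have hab : a ≠ b := fun h => D.src_ne_tgt e (D.f_inj h)
  let Y : Set ℂ := D.pts {e}ᶜ
  have hYS : ∀ {p}, p ∉ Y → p ∉ D.pts (S : Set E) := by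
    intro p hp h
    refine hp (D.pts_mono ?_ h)
    intro x hx; rintro rfl; exact heS hx
  let s₂ : ℂ → ℂ := fun p => sg c * D.R z p / D.pr S p / (a - p)
  let s : ℂ → ℂ := fun p => if p ∈ Set.range (D.γ e) then s₂ p else half (D.γ e) p
  have hsplit : ∀ p, D.pr (supp z) p = half (D.γ e) p * (a - p) * D.pr S p := by
    intro p
    rw [pr, ← Finset.mul_prod_erase _ _ hes, pr]
  have hs2Y : ∀ p, p ∉ Y → s p = s₂ p := by
    intro p hp
    by_cases h : p ∈ Set.range (D.γ e)
    · simp only [s, if_pos h]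
    · have hpX : p ∉ D.pts Set.univ := by
        rintro (h' | h')
        · exact hp (Or.inl h')
        · simp only [Set.mem_iUnion] at h'
          obtain ⟨e', -, he'⟩ := h'
          by_cases hee : e' = e
          · subst hee; exact h he'
          · exact hp (Or.inr (Set.mem_biUnion hee he'))
      have hk := D.key hz (p := p) (fun h => hpX (D.pts_mono (Set.subset_univ _) h))
      rw [hc p hpX, hsplit] at hk
      simp only [s, if_neg h, s₂]
      rw [← hk]
      have h1 : a - p ≠ 0 := D.not_vert hp _
      have h2 := D.pr_ne S (hYS hp)
      field_simp
  refine no_sqrt hab s ?_ ?_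
  · intro p hp
    simp only [Set.mem_compl_iff, Set.mem_insert_iff, Set.mem_singleton_iff, not_or] at hp
    refine ContinuousAt.continuousWithinAt ?_
    by_cases h : p ∈ Set.range (D.γ e)
    · have hpY : p ∉ Y := by
        intro hY
        rcases D.inter_vert e (S := {e}ᶜ) (by simp) h hY with h' | h'
        · exact hp.1 h'
        · exact hp.2 h'
      have hopen : IsOpen Yᶜ := (D.pts_compact _).isClosed.isOpen_compl
      have hs₂ : ContinuousOn s₂ Yᶜ := by
        refine ContinuousOn.div (ContinuousOn.div ?_ ?_ ?_) (by fun_prop) ?_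
        · exact (continuous_const.mul (D.R_cont z)).continuousOn
        · exact (D.pr_cont S).mono fun p hp => hYS hp
        · exact fun p hp => D.pr_ne S (hYS hp)
        · exact fun p hp => D.not_vert hp _
      refine (hs₂.continuousAt (hopen.mem_nhds hpY)).congr ?_
      filter_upwards [hopen.mem_nhds hpY] with q hq using (hs2Y q hq).symm
    · have hopen : IsOpen (Set.range (D.γ e))ᶜ :=
        (isCompact_range (D.γ_cont e)).isClosed.isOpen_compl
      refine ((half_cont (D.γ_cont e)).continuousAt (hopen.mem_nhds h)).congr ?_
      filter_upwards [hopen.mem_nhds h] with q hq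
      simp only [s]
      rw [if_neg hq]
  · intro p hpa hpb
    by_cases h : p ∈ Set.range (D.γ e)
    · have hpY : p ∉ Y := by
        intro hY
        rcases D.inter_vert e (S := {e}ᶜ) (by simp) h hY with h' | h'
        · exact hpa h'
        · exact hpb h'
      simp only [s, if_pos h, s₂]
      rw [div_pow, div_pow, mul_pow, sg_sq, D.R_sq hz, D.pr_sq S (hYS hpY),
        ← Finset.mul_prod_erase _ _ hes]
      have h1 : a - p ≠ 0 := D.not_vert hpY _
      have h3 := pow_ne_zero 2 (D.pr_ne S (hYS hpY))
      rw [D.pr_sq S (hYS hpY)] at h3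
      rw [← hS, ← ha, ← hb]
      field_simp
    · simp only [s, if_neg h]
      rw [half_sq (D.γ_cont e) h, D.γ0, D.γ1]


end Drw

theorem continuousOn_extend {γ : I01 → ℂ} (hγ : Continuous γ) (hi : Function.Injective γ)
    {L : I01 → ℂ} (hL : Continuous L) :
    ContinuousOn (Function.extend γ L 0) (Set.range γ) := by
  have hemb : Topology.IsEmbedding γ := (hγ.isClosedEmbedding hi).isEmbedding
  rw [continuousOn_iff_continuous_domRestrict]
  have : (Set.range γ).domRestrict (Function.extend γ L 0) = L ∘ hemb.toHomeomorph.symm := by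
    ext ⟨z, t, rfl⟩
    have : hemb.toHomeomorph.symm ⟨γ t, t, rfl⟩ = t := by
      rw [Homeomorph.symm_apply_eq]; rfl
    simp [Set.domRestrict, hi.extend_apply, this]
  rw [this]
  exact hL.comp (Homeomorph.continuous _)

namespace Drw
variable {V E : Type*} (D : Drw V E)

def inc (e : E) (v : V) : Prop := D.src e = v ∨ D.tgt e = v

def Leafy (S : Finset E) : Prop := ∃ v, ∃ e ∈ S, D.inc e v ∧ ∀ e' ∈ S, D.inc e' v → e' = e

theorem vert_on_edge {e : E} {t : I01} {v : V} (h : D.γ e t = D.f v) : D.inc e v := by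
  by_cases h0 : t = 0
  · left; rw [h0, D.γ0] at h; exact D.f_inj h
  by_cases h1 : t = 1
  · right; rw [h1, D.γ1] at h; exact D.f_inj h
  exact absurd h (D.avoid e t h0 h1 v)

theorem exists_log_pts [Fintype V] [Fintype E] [DecidableEq V] [DecidableEq E] (S : Finset E)
    (hS : ∀ T ⊆ S, T.Nonempty → D.Leafy T)
    {p q : ℂ} (hp : p ∉ D.pts (S : Set E)) (hq : q ∉ D.pts (S : Set E)) :
    ∃ g : ℂ → ℂ, ContinuousOn g (D.pts (S : Set E)) ∧
      ∀ z ∈ D.pts (S : Set E), Complex.exp (g z) = (z - p) / (z - q) := by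
  induction hn : S.card generalizing S with
  | zero =>
    rw [Finset.card_eq_zero] at hn
    subst hn
    refine ⟨fun z => Complex.log ((z - p) / (z - q)), ?_, ?_⟩
    · refine Set.Finite.continuousOn ?_ _
      simpa [pts] using Set.finite_range D.f
    · intro z hz
      refine Complex.exp_log (div_ne_zero ?_ ?_)
      · rintro h; rw [sub_eq_zero.1 h] at hz; exact hp hz
      · rintro h; rw [sub_eq_zero.1 h] at hz; exact hq hz
  | succ n ih =>
    obtain ⟨v, e, he, hev, huniq⟩ := hS S le_rfl (by rw [← Finset.card_pos]; omega)
    have hsub : (↑(S.erase e) : Set E) ⊆ S := by exact_mod_cast S.erase_subset e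
    obtain ⟨g, hg, hge⟩ := ih (S.erase e) (fun T hT => hS T (hT.trans (S.erase_subset e)))
      (fun h => hp (D.pts_mono hsub h)) (fun h => hq (D.pts_mono hsub h))
      (by rw [Finset.card_erase_of_mem he]; omega)
    obtain ⟨u, τ, hτ, huv, hends⟩ : ∃ u, ∃ τ : I01, D.γ e τ = D.f u ∧ u ≠ v ∧
        ∀ w, D.inc e w → w = u ∨ w = v := by
      rcases hev with h | h
      · refine ⟨D.tgt e, 1, D.γ1 e, ?_, ?_⟩
        · rw [← h]; exact (D.src_ne_tgt e).symm
        · rintro w (hw | hw) <;> simp [← hw, ← h]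
      · refine ⟨D.src e, 0, D.γ0 e, ?_, ?_⟩
        · rw [← h]; exact (D.src_ne_tgt e)
        · rintro w (hw | hw) <;> simp [← hw, ← h]
    have heS : e ∈ (S : Set E) := by exact_mod_cast he
    have hpe : ∀ t, D.γ e t - p ≠ 0 := fun t h => D.not_edge heS hp ⟨t, sub_eq_zero.1 h⟩
    have hqe : ∀ t, D.γ e t - q ≠ 0 := fun t h => D.not_edge heS hq ⟨t, sub_eq_zero.1 h⟩
    obtain ⟨L, hL, hLe⟩ := exists_log_path (fun t => (D.γ e t - p) / (D.γ e t - q))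
      (((D.γ_cont e).sub continuous_const).div₀ ((D.γ_cont e).sub continuous_const) hqe)
      (fun t => div_ne_zero (hpe t) (hqe t))
    set c : ℂ := g (D.f u) - L τ with hc
    have hec : Complex.exp c = 1 := by
      rw [hc, Complex.exp_sub, hge _ (D.vert_mem _ u), hLe, hτ]
      refine div_self ?_
      rw [← hτ]; exact div_ne_zero (hpe τ) (hqe τ)
    classical
    let g2 : ℂ → ℂ := Function.extend (D.γ e) (fun t => L t + c) 0
    have hg2 : ContinuousOn g2 (Set.range (D.γ e)) :=
      continuousOn_extend (D.γ_cont e) (D.γ_inj e) (hL.add continuous_const)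
    have hg2a : ∀ t, g2 (D.γ e t) = L t + c := fun t => (D.γ_inj e).extend_apply _ _ _
    let G : ℂ → ℂ := fun z => if z ∈ Set.range (D.γ e) then g2 z else g z
    let K1 : Set ℂ := D.f '' {v}ᶜ ∪ ⋃ e' ∈ (S.erase e : Set E), Set.range (D.γ e')
    have hK1sub : K1 ⊆ D.pts (S.erase e : Set E) :=
      Set.union_subset_union_left _ (Set.image_subset_range _ _)
    have hK1v : D.f v ∉ K1 := by
      rintro (⟨w, hw, hw'⟩ | h)
      · exact hw (D.f_inj hw')
      · simp only [Set.mem_iUnion] at h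
        obtain ⟨e', he', t, ht⟩ := h
        have he'' : e' ∈ S.erase e := by exact_mod_cast he'
        exact Finset.ne_of_mem_erase he'' (huniq e' (Finset.mem_of_mem_erase he'')
          (D.vert_on_edge ht))
    have hK1c : IsClosed K1 := by
      refine IsCompact.isClosed (IsCompact.union ?_ ?_)
      · exact (Set.toFinite _).isCompact
      · exact (Set.toFinite _).isCompact_biUnion fun e _ => isCompact_range (D.γ_cont e)
    have hK2c : IsClosed (Set.range (D.γ e)) := (isCompact_range (D.γ_cont e)).isClosed
    have hG1 : ∀ z ∈ K1, G z = g z := by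
      intro z hz
      by_cases h : z ∈ Set.range (D.γ e)
      · have h1 := D.inter_vert e (S := (S.erase e : Set E)) (by simp) h (hK1sub hz)
        have h2 : z = D.f u ∨ z = D.f v := by
          rcases h1 with h1 | h1
          · rcases hends _ (Or.inl rfl) with h' | h' <;> simp [h1, h']
          · rcases hends _ (Or.inr rfl) with h' | h' <;> simp [h1, h']
        have h3 : z = D.f u := by
          rcases h2 with h2 | h2
          · exact h2
          · rw [h2] at hz; exact absurd hz hK1v
        simp only [G, if_pos h]
        rw [h3]
        conv_lhs => rw [← hτ]
        rw [hg2a, hc]; ring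
      · simp only [G, if_neg h]
    have hcov : D.pts (S : Set E) = K1 ∪ Set.range (D.γ e) := by
      apply Set.Subset.antisymm
      · rintro z (⟨w, rfl⟩ | h)
        · by_cases hw : w = v
          · right
            rw [hw]
            rcases hev with h | h
            · exact ⟨0, by rw [D.γ0, h]⟩
            · exact ⟨1, by rw [D.γ1, h]⟩
          · left; left; exact ⟨w, hw, rfl⟩
        · simp only [Set.mem_iUnion] at h
          obtain ⟨e', he', h⟩ := h
          by_cases hee : e' = e
          · subst hee; right; exact h
          · left; right
            refine Set.mem_biUnion (x := e') ?_ h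
            have : e' ∈ S := by exact_mod_cast he'
            simpa [hee] using this
      · refine Set.union_subset (hK1sub.trans (D.pts_mono hsub)) ?_
        rintro _ ⟨t, rfl⟩
        exact D.edge_mem heS t
    refine ⟨G, ?_, ?_⟩
    · rw [hcov]
      refine ContinuousOn.union_of_isClosed ?_ ?_ hK1c hK2c
      · exact (hg.mono hK1sub).congr hG1
      · refine hg2.congr fun z hz => ?_
        simp only [G, if_pos hz]
    · rw [hcov]
      rintro z (hz | hz)
      · rw [hG1 z hz]; exact hge z (hK1sub hz)
      · simp only [G, if_pos hz]
        obtain ⟨t, rfl⟩ := hz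
        rw [hg2a, Complex.exp_add, hLe, hec, mul_one]

end Drw

namespace Drw
variable {V E : Type*} (D : Drw V E)
set_option linter.unusedSectionVars false

noncomputable def mid : I01 := ⟨1/2, by norm_num, by norm_num⟩

/-- the part of the plane around the (open) edge `e` -/
def N (e : E) : Set ℂ := connectedComponentIn (D.pts {e}ᶜ)ᶜ (D.γ e mid)

variable [Fintype V] [Fintype E] [DecidableEq V]

theorem N_open (e : E) : IsOpen (D.N e) :=
  (D.pts_compact _).isClosed.isOpen_compl.connectedComponentIn

theorem N_sub (e : E) : D.N e ⊆ (D.pts {e}ᶜ)ᶜ := connectedComponentIn_subset _ _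

theorem N_conn (e : E) : IsPreconnected (D.N e) := isPreconnected_connectedComponentIn

theorem interior_mem_N (e : E) {t : I01} (h0 : t ≠ 0) (h1 : t ≠ 1) : D.γ e t ∈ D.N e := by
  let J : Set I01 := Set.Ioo 0 1
  have hJ : IsPreconnected (D.γ e '' J) :=
    isPreconnected_Ioo.image _ (D.γ_cont e).continuousOn
  have hm : mid ∈ J := by
    constructor <;> rw [← Subtype.coe_lt_coe] <;> norm_num [mid]
  have ht : t ∈ J := ⟨lt_of_le_of_ne t.2.1 (fun h => h0 (h.symm)),
    lt_of_le_of_ne t.2.2 (fun h => h1 h)⟩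
  refine hJ.subset_connectedComponentIn (Set.mem_image_of_mem _ hm) ?_ (Set.mem_image_of_mem _ ht)
  rintro _ ⟨s, hs, rfl⟩ h
  have h' := D.inter_vert e (S := {e}ᶜ) (by simp) ⟨s, rfl⟩ h
  have hs0 : s ≠ 0 := hs.1.ne'
  have hs1 : s ≠ 1 := hs.2.ne
  rcases h' with h' | h'
  · exact D.avoid e s hs0 hs1 _ h'
  · exact D.avoid e s hs0 hs1 _ h'

theorem four_le [DecidableEq E] (hleaf : ∀ S : Finset E, S.Nonempty → S.card ≤ 3 → D.Leafy S)
    {p q : ℂ} (hp : p ∉ D.pts Set.univ) (hq : q ∉ D.pts Set.univ) {z : E → ZMod 2}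
    (hz : D.bd z = 0) (hne : D.W p z ≠ D.W q z) (S : Finset E) (hS : ∀ e, e ∈ S ↔ p ∈ D.N e) :
    4 ≤ S.card := by
  by_contra hlt
  set X := D.pts Set.univ with hX
  have hXo : IsOpen Xᶜ := (D.pts_compact _).isClosed.isOpen_compl
  set F := connectedComponentIn Xᶜ p with hF
  have hpF : p ∈ F := mem_connectedComponentIn hp
  have hFo : IsOpen F := hXo.connectedComponentIn
  have hFX : F ⊆ Xᶜ := connectedComponentIn_subset _ _
  have hqF : q ∉ F := by
    intro h
    exact hne (D.W_const hz isPreconnected_connectedComponentIn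
      (hFX.trans (Set.compl_subset_compl.2 (D.pts_mono (Set.subset_univ _)))) hpF h)
  have hfr : frontier F ⊆ D.pts (S : Set E) := by
    intro x hx
    rw [hFo.frontier_eq] at hx
    have hxX : x ∈ X := by
      by_contra hxX
      have hx' : x ∈ connectedComponentIn Xᶜ x := mem_connectedComponentIn hxX
      obtain ⟨y, hy1, hy2⟩ := mem_closure_iff.1 hx.1 _ hXo.connectedComponentIn hx'
      have e1 := connectedComponentIn_eq hy1
      have e2 := connectedComponentIn_eq hy2
      apply hx.2
      rw [hF, e2, ← e1]; exact hx'
    rcases hxX with h | h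
    · exact Or.inl h
    · simp only [Set.mem_iUnion] at h
      obtain ⟨e, -, t, rfl⟩ := h
      by_cases h0 : t = 0
      · rw [h0, D.γ0]; exact D.vert_mem _ _
      by_cases h1 : t = 1
      · rw [h1, D.γ1]; exact D.vert_mem _ _
      have hxN := D.interior_mem_N e h0 h1
      obtain ⟨y, hy1, hy2⟩ := mem_closure_iff.1 hx.1 _ (D.N_open e) hxN
      refine D.edge_mem ?_ t
      have : e ∈ S := by
        rw [hS]
        have e1 := connectedComponentIn_eq hy1
        have : F ⊆ connectedComponentIn (D.pts {e}ᶜ)ᶜ y :=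
          isPreconnected_connectedComponentIn.subset_connectedComponentIn hy2
            (hFX.trans (Set.compl_subset_compl.2 (D.pts_mono (Set.subset_univ _))))
        rw [N, e1]; exact this hpF
      exact_mod_cast this
  have hpS : p ∉ D.pts (S : Set E) := fun h => hp (D.pts_mono (Set.subset_univ _) h)
  have hqS : q ∉ D.pts (S : Set E) := fun h => hq (D.pts_mono (Set.subset_univ _) h)
  obtain ⟨g, hg, hge⟩ := D.exists_log_pts S
    (fun T hT hTn => hleaf T hTn ((Finset.card_le_card hT).trans (by omega))) hpS hqS
  exact no_log (D.pts_compact _) hfr hpF hqF hpS hqS g hg hge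


theorem bound [Nonempty V] [DecidableEq E]
    (hleaf : ∀ S : Finset E, S.Nonempty → S.card ≤ 3 → D.Leafy S)
    (hEV : Fintype.card V ≤ Fintype.card E) : Fintype.card E + 4 ≤ 2 * Fintype.card V := by
  classical
  let C := LinearMap.ker D.bd
  let w : ℂ → Module.Dual (ZMod 2) C := fun p => (D.W p).domRestrict C
  have hw : ∀ p (z : C), w p z = D.W p z := fun p z => rfl
  have : Finite (Module.Dual (ZMod 2) C) := Module.finite_of_finite (ZMod 2)
  let Ws : Finset (Module.Dual (ZMod 2) C) := (Set.toFinite (w '' (D.pts Set.univ)ᶜ)).toFinset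
  have hWs : ∀ x, x ∈ Ws ↔ ∃ p, p ∉ D.pts Set.univ ∧ w p = x := by
    intro x; simp [Ws]
  have hrank := D.finrank_ker
  have hC : 1 ≤ Module.finrank (ZMod 2) C := by
    change Fintype.card E + 1 ≤ Module.finrank (ZMod 2) C + _ at hrank; omega
  obtain ⟨p0, hp0⟩ : ∃ p, p ∉ D.pts Set.univ := by
    by_contra h
    push Not at h
    have : D.pts Set.univ = Set.univ := Set.eq_univ_of_forall h
    exact noncompact_univ ℂ (this ▸ D.pts_compact Set.univ)
  have hw0 : w p0 ∈ Ws := (hWs _).2 ⟨p0, hp0, rfl⟩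
  have hcard : Module.finrank (ZMod 2) C + 1 ≤ Ws.card := by
    let T : C →ₗ[ZMod 2] ((Ws.erase (w p0)) → ZMod 2) :=
      LinearMap.pi fun x => (x : Module.Dual (ZMod 2) C) - w p0
    have hT : Function.Injective T := by
      rw [← LinearMap.ker_eq_bot, LinearMap.ker_eq_bot']
      intro z hz
      apply Subtype.ext
      refine D.sep (z := z) z.2 (D.W p0 z) fun p hp => ?_
      by_cases h : w p = w p0
      · rw [← hw, ← hw, h]
      · have := congrFun hz ⟨w p, Finset.mem_erase.2 ⟨h, (hWs _).2 ⟨p, hp, rfl⟩⟩⟩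
        simp only [T, LinearMap.pi_apply, LinearMap.sub_apply, Pi.zero_apply] at this
        rw [← hw, ← hw]; exact sub_eq_zero.1 this
    have := LinearMap.finrank_le_finrank_of_injective hT
    rw [Module.finrank_fintype_fun_eq_card, Fintype.card_coe, Finset.card_erase_of_mem hw0] at this
    have := Finset.card_pos.2 ⟨_, hw0⟩
    omega
  have hex : ∀ x, ∃ p, x ∈ Ws → p ∉ D.pts Set.univ ∧ w p = x := by
    intro x
    by_cases h : x ∈ Ws
    · obtain ⟨p, hp⟩ := (hWs x).1 h; exact ⟨p, fun _ => hp⟩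
    · exact ⟨0, fun h' => absurd h' h⟩
  choose P hP using hex
  let r : Module.Dual (ZMod 2) C → E → Prop := fun x e => P x ∈ D.N e
  have hdc := Finset.sum_card_bipartiteAbove_eq_sum_card_bipartiteBelow (s := Ws)
    (t := (Finset.univ : Finset E)) r
  have h1 : 4 * Ws.card ≤ ∑ a ∈ Ws, (Finset.bipartiteAbove r Finset.univ a).card := by
    rw [mul_comm, ← smul_eq_mul]
    refine Finset.card_nsmul_le_sum _ _ _ fun x hx => ?_
    obtain ⟨y, hy, hyx⟩ : ∃ y ∈ Ws, y ≠ x := Finset.exists_mem_ne (by omega) x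
    have : ∃ z, w (P x) z ≠ w (P y) z := by
      by_contra h; push Not at h
      apply hyx; rw [← (hP x hx).2, ← (hP y hy).2]
      exact (LinearMap.ext h).symm
    obtain ⟨z, hz⟩ := this
    refine D.four_le hleaf (hP x hx).1 (hP y hy).1 (z := z) z.2 hz _ fun e => ?_
    simp [Finset.bipartiteAbove, r]
  have h2 : ∑ e : E, (Finset.bipartiteBelow r Ws e).card ≤ 2 * Fintype.card E := by
    rw [mul_comm, ← smul_eq_mul, ← Finset.card_univ]
    refine Finset.sum_le_card_nsmul _ _ _ fun e _ => ?_
    by_contra hlt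
    push Not at hlt
    obtain ⟨a, ha, b, hb, c, hc, hab, hac, hbc⟩ := Finset.two_lt_card.1 hlt
    have key : ∀ x y, x ∈ Finset.bipartiteBelow r Ws e → y ∈ Finset.bipartiteBelow r Ws e →
        x ≠ y → ∀ z : C, x z - y z = (z : E → ZMod 2) e := by
      intro x y hx hy hxy
      simp only [Finset.bipartiteBelow, Finset.mem_filter, r] at hx hy
      have h0 : ∀ z : C, (z : E → ZMod 2) e = 0 → x z - y z = 0 := by
        intro z hz
        rw [sub_eq_zero, ← (hP x hx.1).2, ← (hP y hy.1).2, hw, hw]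
        refine D.W_const z.2 (D.N_conn e) ((D.N_sub e).trans ?_) hx.2 hy.2
        refine Set.compl_subset_compl.2 (D.pts_mono ?_)
        intro e' he' h
        rw [Set.mem_singleton_iff] at h; subst h
        exact mem_supp.1 (by exact_mod_cast he') hz
      obtain ⟨z1, hz1⟩ : ∃ z, x z - y z ≠ 0 := by
        by_contra h; push Not at h
        exact hxy (LinearMap.ext fun z => sub_eq_zero.1 (h z))
      have hz1' : x z1 - y z1 = 1 := (zmod2 _).resolve_left hz1
      have hz1e : (z1 : E → ZMod 2) e = 1 := (zmod2 _).resolve_left fun h => hz1 (h0 _ h)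
      intro z
      rcases zmod2 ((z : E → ZMod 2) e) with h | h
      · rw [h, h0 z h]
      · have := h0 (z - z1) (by simp [h, hz1e])
        rw [map_sub, map_sub] at this
        rw [h]; linear_combination this + hz1'
    obtain ⟨z, hz⟩ : ∃ z, a z ≠ b z := by
      by_contra h; push Not at h; exact hab (LinearMap.ext h)
    have k1 := key a b ha hb hab z
    have k2 := key a c ha hc hac z
    have k3 := key b c hb hc hbc z
    apply hz
    have : (a z - b z) = 0 := by linear_combination k2 - k3
    exact sub_eq_zero.1 this
  have hrank' : Fintype.card E + 1 ≤ Module.finrank (ZMod 2) C + Fintype.card V := hrank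
  omega

end Drw

theorem planar_bound {n : ℕ} (hn : 2 ≤ n) (H : SimpleGraph (Fin n ⊕ Fin n))
    (hP : IsPlanar H) :
    Nat.card {ab : Fin n × Fin n // H.Adj (Sum.inl ab.1) (Sum.inr ab.2)} ≤ 4 * n - 4 := by
  classical
  obtain ⟨f, γ, hf, hc, hends, hinj, havoid, hcross⟩ := hP
  let E := {ab : Fin n × Fin n // H.Adj (Sum.inl ab.1) (Sum.inr ab.2)}
  let ed : E → H.edgeSet := fun e => ⟨s(Sum.inl e.1.1, Sum.inr e.1.2), e.2⟩
  have hed : Function.Injective ed := by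
    rintro ⟨⟨a, b⟩, h⟩ ⟨⟨a', b'⟩, h'⟩ heq
    have := congrArg Subtype.val heq
    simp [ed] at this
    obtain ⟨rfl, rfl⟩ := this
    rfl
  choose u v huv h0 h1 using hends
  let φ : ℝ × ℝ → ℂ := Complex.equivRealProdCLM.symm
  have hφ : Function.Injective φ := Complex.equivRealProdCLM.symm.injective
  have hφc : Continuous φ := Complex.equivRealProdCLM.symm.continuous
  let D : Drw (Fin n ⊕ Fin n) E :=
    { f := φ ∘ f
      γ := fun e => φ ∘ γ (ed e)
      src := fun e => u (ed e)
      tgt := fun e => v (ed e)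
      f_inj := hφ.comp hf
      γ_cont := fun e => hφc.comp (hc _)
      γ_inj := fun e => hφ.comp (hinj _)
      γ0 := fun e => congrArg φ (h0 (ed e))
      γ1 := fun e => congrArg φ (h1 (ed e))
      avoid := by
        intro e t ht0 ht1 w h
        refine havoid (ed e) t (fun h => ht0 (Subtype.ext h)) (fun h => ht1 (Subtype.ext h)) w (hφ h)
      cross := by
        intro e e' hee s t h
        obtain ⟨w, hw⟩ := hcross (ed e) (ed e') (fun h => hee (hed h)) s t (hφ h)
        exact ⟨w, congrArg φ hw⟩ }
  have hinc : ∀ (e : E) w, D.inc e w ↔ w = Sum.inl e.1.1 ∨ w = Sum.inr e.1.2 := by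
    intro e w
    have h : s(Sum.inl e.1.1, Sum.inr e.1.2) = s(u (ed e), v (ed e)) := huv (ed e)
    change u (ed e) = w ∨ v (ed e) = w ↔ _
    rw [Sym2.eq_iff] at h
    rcases h with ⟨h, h'⟩ | ⟨h, h'⟩ <;> rw [h, h'] <;> grind
  have hleaf : ∀ S : Finset E, S.Nonempty → S.card ≤ 3 → D.Leafy S := by
    rintro S ⟨e, he⟩ hS
    by_contra hL
    have hL' : ∀ w, ∀ e ∈ S, D.inc e w → ∃ e' ∈ S, D.inc e' w ∧ e' ≠ e := by
      intro w e he hew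
      by_contra h; push Not at h
      exact hL ⟨w, e, he, hew, h⟩
    obtain ⟨e1, he1, hi1, hn1⟩ := hL' (Sum.inl e.1.1) e he ((hinc _ _).2 (Or.inl rfl))
    obtain ⟨e2, he2, hi2, hn2⟩ := hL' (Sum.inr e.1.2) e he ((hinc _ _).2 (Or.inr rfl))
    obtain ⟨e3, he3, hi3, hn3⟩ := hL' (Sum.inr e1.1.2) e1 he1 ((hinc _ _).2 (Or.inr rfl))
    have a1 : e.1.1 = e1.1.1 := by simpa using (hinc _ _).1 hi1
    have a2 : e.1.2 = e2.1.2 := by simpa using (hinc _ _).1 hi2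
    have a3 : e1.1.2 = e3.1.2 := by simpa using (hinc _ _).1 hi3
    have b1 : e1.1.2 ≠ e.1.2 := fun h => hn1 (Subtype.ext (Prod.ext a1.symm h))
    have b2 : e2.1.1 ≠ e.1.1 := fun h => hn2 (Subtype.ext (Prod.ext h a2.symm))
    have b3 : e3.1.1 ≠ e1.1.1 := fun h => hn3 (Subtype.ext (Prod.ext h a3.symm))
    have h4 : ({e, e1, e2, e3} : Finset E).card = 4 := by
      rw [Finset.card_insert_of_notMem, Finset.card_insert_of_notMem, Finset.card_pair]
      · rintro rfl; exact b1 (a3.trans a2.symm)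
      · simp only [Finset.mem_insert, Finset.mem_singleton, not_or]
        exact ⟨by rintro rfl; exact b2 a1.symm, by rintro rfl; exact b3 rfl⟩
      · simp only [Finset.mem_insert, Finset.mem_singleton, not_or]
        exact ⟨hn1.symm, hn2.symm, by rintro rfl; exact b1 a3⟩
    have : ({e, e1, e2, e3} : Finset E) ⊆ S := by
      intro x hx; simp only [Finset.mem_insert, Finset.mem_singleton] at hx
      rcases hx with rfl | rfl | rfl | rfl <;> assumption
    have := Finset.card_le_card this
    omega
  have hV : Fintype.card (Fin n ⊕ Fin n) = 2 * n := by simp; ring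
  have : Nonempty (Fin n ⊕ Fin n) := ⟨Sum.inl ⟨0, by omega⟩⟩
  have hcE : Nat.card E = Fintype.card E := Nat.card_eq_fintype_card
  change Nat.card E ≤ _
  rw [hcE]
  by_cases h : Fintype.card (Fin n ⊕ Fin n) ≤ Fintype.card E
  · have := D.bound hleaf h
    omega
  · omega

theorem lower {n t : ℕ} (hn : 1 ≤ n) (H : Fin t → SimpleGraph (Fin n ⊕ Fin n))
    (hP : ∀ i, IsPlanar (H i)) (hu : (⨆ i, H i) = completeBipartiteGraph (Fin n) (Fin n)) :
    n + 2 ≤ 4 * t := by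
  classical
  have hex : ∀ a b : Fin n, ∃ i, (H i).Adj (Sum.inl a) (Sum.inr b) := by
    intro a b
    have : (completeBipartiteGraph (Fin n) (Fin n)).Adj (Sum.inl a) (Sum.inr b) := by simp
    rw [← hu, SimpleGraph.iSup_adj] at this
    exact this
  rcases Nat.lt_or_ge n 2 with h | h
  · obtain ⟨i, -⟩ := hex ⟨0, hn⟩ ⟨0, hn⟩
    have := i.2
    omega
  · choose c hc using hex
    let ψ : Fin n × Fin n → Σ i : Fin t,
        {ab : Fin n × Fin n // (H i).Adj (Sum.inl ab.1) (Sum.inr ab.2)} :=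
      fun ab => ⟨c ab.1 ab.2, ⟨ab, hc _ _⟩⟩
    have hψ : Function.Injective ψ := by
      intro x y hxy
      have := congrArg (fun s => s.2.1) hxy
      exact this
    have h1 := Nat.card_le_card_of_injective ψ hψ
    rw [Nat.card_sigma] at h1
    have h2 : ∑ i : Fin t, Nat.card
        {ab : Fin n × Fin n // (H i).Adj (Sum.inl ab.1) (Sum.inr ab.2)} ≤ t * (4 * n - 4) := by
      refine (Finset.sum_le_card_nsmul _ _ (4 * n - 4) fun i _ => planar_bound h (H i) (hP i)).trans ?_
      simp
    have h3 : n * n ≤ t * (4 * n - 4) := by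
      refine le_trans ?_ (h1.trans h2)
      simp
    by_contra hlt
    obtain ⟨k, rfl⟩ : ∃ k, n = k + 1 := ⟨n - 1, by omega⟩
    have h4 : 4 * (k + 1) - 4 = 4 * k := by omega
    rw [h4] at h3
    have h5 : 4 * t ≤ k + 2 := by omega
    nlinarith

theorem arc_aux {a b c d x : ℝ} (hx : a < x) (hx' : x < b) (hy : c < x) (hy' : x < d)
    (h : (x - a) * (b - x) = (x - c) * (d - x)) : (a < c ∧ b < d) ∨ (c < a ∧ d < b) ∨ (a = c ∧ b = d) := by
  rcases lt_trichotomy a c with h1 | h1 | h1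
  · left; refine ⟨h1, ?_⟩
    by_contra h2; push Not at h2; nlinarith [mul_pos (sub_pos.2 h1) (sub_pos.2 hx'), mul_nonneg (sub_pos.2 hy).le (sub_nonneg.2 h2)]
  · right; right; refine ⟨h1, ?_⟩
    subst h1
    have := mul_left_cancel₀ (sub_pos.2 hx).ne' h
    linarith
  · right; left; refine ⟨h1, ?_⟩
    by_contra h2; push Not at h2; nlinarith [mul_pos (sub_pos.2 h1) (sub_pos.2 hy'), mul_nonneg (sub_pos.2 hx).le (sub_nonneg.2 h2)]

theorem book_planar {V : Type*} (H : SimpleGraph V) (pos : V → ℕ) (hpos : Function.Injective pos)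
    (pg : V → V → Bool)
    (hnc : ∀ a b c d, H.Adj a b → H.Adj c d → pos a < pos c → pos c < pos b → pos b < pos d →
      pg a b ≠ pg c d) : IsPlanar H := by
  have hex : ∀ e : H.edgeSet, ∃ ab : V × V, (e : Sym2 V) = s(ab.1, ab.2) ∧ pos ab.1 < pos ab.2 ∧
      H.Adj ab.1 ab.2 := by
    rintro ⟨e, he⟩
    induction e using Sym2.ind with
    | _ a b =>
      have he' : H.Adj a b := he
      rcases lt_trichotomy (pos a) (pos b) with h | h | h
      · exact ⟨(a, b), rfl, h, he'⟩
      · exact absurd (hpos h) he'.ne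
      · exact ⟨(b, a), Sym2.eq_swap, h, he'.symm⟩
  choose ab hab hlt hadj using hex
  let A : H.edgeSet → ℝ := fun e => pos (ab e).1
  let B : H.edgeSet → ℝ := fun e => pos (ab e).2
  have hAB : ∀ e, A e < B e := fun e => Nat.cast_lt.2 (hlt e)
  let σ : H.edgeSet → ℝ := fun e => if pg (ab e).1 (ab e).2 then 1 else -1
  let X : H.edgeSet → Set.Icc (0:ℝ) 1 → ℝ := fun e t => A e + t * (B e - A e)
  have hσ : ∀ e, σ e = 1 ∨ σ e = -1 := fun e => by
    by_cases h : pg (ab e).1 (ab e).2 <;> simp [σ, h]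
  have hσ0 : ∀ e, σ e ≠ 0 := fun e => by rcases hσ e with h | h <;> rw [h] <;> norm_num
  have hXa : ∀ e (t : Set.Icc (0:ℝ) 1), A e ≤ X e t := fun e t => by
    have := mul_nonneg t.2.1 (sub_nonneg.2 (hAB e).le); simp only [X]; linarith
  have hXb : ∀ e (t : Set.Icc (0:ℝ) 1), X e t ≤ B e := fun e t => by
    have := mul_le_mul_of_nonneg_right t.2.2 (sub_nonneg.2 (hAB e).le); simp only [X]; linarith
  let f : V → ℝ × ℝ := fun v => ((pos v : ℝ), 0)
  refine ⟨f, fun e t => (X e t, σ e * ((X e t - A e) * (B e - X e t))), ?_, ?_, ?_, ?_, ?_, ?_⟩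
  · intro v w h
    have := congrArg Prod.fst h
    exact hpos (Nat.cast_injective (R := ℝ) this)
  · intro e
    have : Continuous (X e) := by simp only [X]; fun_prop
    fun_prop
  · intro e
    refine ⟨(ab e).1, (ab e).2, hab e, ?_, ?_⟩
    · simp [f, X, A]
    · simp [f, X, B]
  · intro e s t h
    have h' : X e s = X e t := congrArg Prod.fst h
    simp only [X] at h'
    have : (s : ℝ) = t := mul_right_cancel₀ (sub_pos.2 (hAB e)).ne' (by linarith)
    exact Subtype.ext this
  · intro e t h0 h1 v h
    have h' : σ e * ((X e t - A e) * (B e - X e t)) = 0 := congrArg Prod.snd h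
    have hd := (sub_pos.2 (hAB e)).ne'
    rcases mul_eq_zero.1 h' with h' | h'
    · exact hσ0 e h'
    rcases mul_eq_zero.1 h' with h' | h'
    · have : (t : ℝ) * (B e - A e) = 0 := by simp only [X] at h'; linarith
      rcases mul_eq_zero.1 this with h' | h'
      · exact h0 h'
      · exact hd h'
    · have : (1 - (t : ℝ)) * (B e - A e) = 0 := by simp only [X] at h'; linarith
      rcases mul_eq_zero.1 this with h' | h'
      · exact h1 (by linarith)
      · exact hd h'
  · intro e e' hee s t h
    have hx : X e s = X e' t := congrArg Prod.fst h
    have hy : σ e * ((X e s - A e) * (B e - X e s)) = σ e' * ((X e' t - A e') * (B e' - X e' t)) :=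
      congrArg Prod.snd h
    rw [← hx] at hy
    have hc1 := hXa e' t
    have hc2 := hXb e' t
    rw [← hx] at hc1 hc2
    rcases (hXa e s).eq_or_lt with h1 | h1
    · refine ⟨(ab e).1, ?_⟩
      simp only [f, ← h1]; simp [A]
    rcases (hXb e s).eq_or_lt with h2 | h2
    · refine ⟨(ab e).2, ?_⟩
      simp only [f, h2]; simp [B]
    exfalso
    have hp : 0 < (X e s - A e) * (B e - X e s) := mul_pos (sub_pos.2 h1) (sub_pos.2 h2)
    have hp' : 0 ≤ (X e s - A e') * (B e' - X e s) := mul_nonneg (sub_nonneg.2 hc1) (sub_nonneg.2 hc2)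
    have hne : (X e s - A e') * (B e' - X e s) ≠ 0 := by
      intro h0; rw [h0, mul_zero] at hy
      exact (mul_ne_zero (hσ0 e) hp.ne') hy
    have hc1' : A e' < X e s := lt_of_le_of_ne hc1 fun h => hne (by rw [h]; ring)
    have hc2' : X e s < B e' := lt_of_le_of_ne hc2 fun h => hne (by rw [h]; ring)
    have hp'' := lt_of_le_of_ne hp' hne.symm
    have hσσ : σ e = σ e' := by
      rcases hσ e with h1 | h1 <;> rcases hσ e' with h2 | h2 <;> rw [h1, h2] at hy ⊢ <;> linarith
    have hpg : pg (ab e).1 (ab e).2 = pg (ab e').1 (ab e').2 := by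
      simp only [σ] at hσσ
      split_ifs at hσσ with h1 h2 h2
      · rw [h1, h2]
      · norm_num at hσσ
      · norm_num at hσσ
      · simp only [Bool.not_eq_true] at h1 h2; rw [h1, h2]
    rw [hσσ] at hy
    rcases arc_aux h1 h2 hc1' hc2' (mul_left_cancel₀ (hσ0 e') hy) with ⟨h3, h4⟩ | ⟨h3, h4⟩ | ⟨h3, h4⟩
    · exact hnc _ _ _ _ (hadj e) (hadj e') ((Nat.cast_lt (α := ℝ)).1 h3)
        ((Nat.cast_lt (α := ℝ)).1 (hc1'.trans h2)) ((Nat.cast_lt (α := ℝ)).1 h4) hpg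
    · exact hnc _ _ _ _ (hadj e') (hadj e) ((Nat.cast_lt (α := ℝ)).1 h3)
        ((Nat.cast_lt (α := ℝ)).1 (h1.trans hc2')) ((Nat.cast_lt (α := ℝ)).1 h4) hpg.symm
    · apply hee
      apply Subtype.ext
      rw [hab e, hab e', hpos (Nat.cast_injective (R := ℝ) h3),
        hpos (Nat.cast_injective (R := ℝ) h4)]

theorem slot_le {M s t i j : ℕ} (hj : j < M) (h : s * M + i < t * M + j) : s ≤ t := by
  by_contra hlt
  have : (t + 1) * M ≤ s * M := Nat.mul_le_mul_right _ (by omega)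
  rw [add_mul] at this
  omega

theorem slot_planar {V : Type*} (H : SimpleGraph V) (M : ℕ) (slot idx : V → ℕ)
    (hidx : Function.Injective idx) (hM : ∀ v, idx v < M) (L : List (ℕ × ℕ)) (P : ℕ → ℕ → Bool)
    (core : ℕ → Bool) (hcore : ∀ u v, core (slot u) = true → slot u = slot v → u = v)
    (hL : ∀ x ∈ L, x.1 < x.2)
    (htab : ∀ x ∈ L, ∀ y ∈ L, P x.1 x.2 = P y.1 y.2 → x.1 ≤ y.1 → y.1 ≤ x.2 → x.2 ≤ y.2 →
      (x.1 = y.1 ∧ core x.1 = true) ∨ (y.1 = x.2 ∧ core y.1 = true) ∨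
      (x.2 = y.2 ∧ core x.2 = true))
    (hadj : ∀ u v, H.Adj u v → ((slot u, slot v) ∈ L ∨ (slot v, slot u) ∈ L) ∨
      (slot u = slot v ∧ (idx u = idx v + 1 ∨ idx v = idx u + 1))) : IsPlanar H := by
  have hle : ∀ u v, slot u * M + idx u < slot v * M + idx v → slot u ≤ slot v :=
    fun u v h => slot_le (hM v) h
  have heq : ∀ u v, slot u * M + idx u < slot v * M + idx v → slot u = slot v → idx u < idx v := by
    intro u v h h'; rw [h'] at h; omega
  refine book_planar H (fun v => slot v * M + idx v) ?_ (fun u v => P (slot u) (slot v)) ?_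
  · intro u v h
    simp only at h
    have hu := hM u
    have hv := hM v
    have h1 : slot u ≤ slot v := by
      by_contra hlt
      have : (slot v + 1) * M ≤ slot u * M := Nat.mul_le_mul_right _ (by omega)
      rw [add_mul] at this
      omega
    have h2 : slot v ≤ slot u := by
      by_contra hlt
      have : (slot u + 1) * M ≤ slot v * M := Nat.mul_le_mul_right _ (by omega)
      rw [add_mul] at this
      omega
    rw [le_antisymm h1 h2] at h
    exact hidx (by omega)
  · intro a b c d hab hcd h1 h2 h3 hP
    have l1 := hle _ _ h1
    have l2 := hle _ _ h2
    have l3 := hle _ _ h3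
    rcases hadj a b hab with hab | ⟨hs, hi⟩
    · rcases hadj c d hcd with hcd | ⟨hs, hi⟩
      · have hab' : (slot a, slot b) ∈ L := by
          rcases hab with h | h
          · exact h
          · have := hL _ h; simp only at this; omega
        have hcd' : (slot c, slot d) ∈ L := by
          rcases hcd with h | h
          · exact h
          · have := hL _ h; simp only at this; omega
        rcases htab _ hab' _ hcd' hP l1 l2 l3 with ⟨h, h'⟩ | ⟨h, h'⟩ | ⟨h, h'⟩
        · rw [hcore a c h' h] at h1; omega
        · rw [hcore c b h' h] at h2; omega
        · rw [hcore b d h' h] at h3; omega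
      · have := heq _ _ h2 (by omega)
        have := heq _ _ h3 (by omega)
        omega
    · have := heq _ _ h1 (by omega)
      have := heq _ _ h2 (by omega)
      omega

def bip {n : ℕ} (Q : Fin n → Fin n → Prop) : SimpleGraph (Fin n ⊕ Fin n) where
  Adj x y := ∃ a b, Q a b ∧ ((x = Sum.inl a ∧ y = Sum.inr b) ∨ (x = Sum.inr b ∧ y = Sum.inl a))
  symm := ⟨by
    rintro x y ⟨a, b, h, h'⟩
    exact ⟨a, b, h, h'.symm.imp And.symm And.symm⟩⟩
  loopless := ⟨by
    rintro x ⟨a, b, -, ⟨h, h'⟩ | ⟨h, h'⟩⟩ <;> simp [h] at h'⟩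

theorem bip_le {n : ℕ} (Q : Fin n → Fin n → Prop) :
    bip Q ≤ completeBipartiteGraph (Fin n) (Fin n) := by
  rintro x y ⟨a, b, -, ⟨rfl, rfl⟩ | ⟨rfl, rfl⟩⟩ <;> simp

def bidx {n : ℕ} : Fin n ⊕ Fin n → ℕ := Sum.elim (fun a => 2 * (a : ℕ)) (fun b => 2 * (b : ℕ) + 1)

theorem bip_planar {n : ℕ} (Q : Fin n → Fin n → Prop) (us vs : ℕ → ℕ)
    (L : List (ℕ × ℕ)) (P : ℕ → ℕ → Bool) (core : ℕ → Bool)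
    (huu : ∀ a b, a < n → b < n → core (us a) = true → us a = us b → a = b)
    (hvv : ∀ a b, a < n → b < n → core (vs a) = true → vs a = vs b → a = b)
    (huv : ∀ a b, a < n → b < n → core (us a) = true → us a ≠ vs b)
    (hL : ∀ x ∈ L, x.1 < x.2)
    (htab : ∀ x ∈ L, ∀ y ∈ L, P x.1 x.2 = P y.1 y.2 → x.1 ≤ y.1 → y.1 ≤ x.2 → x.2 ≤ y.2 →
      (x.1 = y.1 ∧ core x.1 = true) ∨ (y.1 = x.2 ∧ core y.1 = true) ∨
      (x.2 = y.2 ∧ core x.2 = true))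
    (hQ : ∀ a b, Q a b → ((us a, vs b) ∈ L ∨ (vs b, us a) ∈ L) ∨ (a = b ∧ us a = vs b)) :
    IsPlanar (bip Q) := by
  refine slot_planar (bip Q) (2 * n) (Sum.elim (fun a => us a) (fun b => vs b)) bidx ?_ ?_ L P core
    ?_ hL htab ?_
  · rintro (a | a) (b | b) h <;> simp [bidx] at h
    · rw [Fin.ext h]
    · omega
    · omega
    · rw [Fin.ext h]
  · rintro (a | a) <;> simp only [bidx, Sum.elim_inl, Sum.elim_inr] <;> omega
  · rintro (a | a) (b | b) h h' <;> simp only [Sum.elim_inl, Sum.elim_inr] at h h'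
    · rw [Fin.ext (huu a b a.2 b.2 h h')]
    · exact absurd h' (huv a b a.2 b.2 h)
    · exact absurd h'.symm (huv b a b.2 a.2 (h' ▸ h))
    · rw [Fin.ext (hvv a b a.2 b.2 h h')]
  · rintro x y ⟨a, b, h, ⟨rfl, rfl⟩ | ⟨rfl, rfl⟩⟩ <;>
      simp only [Sum.elim_inl, Sum.elim_inr, bidx] <;> rcases hQ a b h with h | ⟨rfl, h⟩
    · exact Or.inl h
    · exact Or.inr ⟨h, by omega⟩
    · exact Or.inl h.symm
    · exact Or.inr ⟨h.symm, by omega⟩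

def L1 : List (ℕ × ℕ) := [(0,3),(3,6),(6,9),(0,9),(2,5),(5,8),(8,11),(2,11),(2,3),(5,6),(8,9),
  (0,11),(1,3),(4,6),(7,9),(0,10),(1,11),(2,4),(5,7),(8,10)]

def L2 : List (ℕ × ℕ) := [(0,2),(2,4),(4,6),(0,6),(0,1),(3,4),(4,5),(0,7),(1,2),(2,3),(5,6),(6,7)]

def P1 (a b : ℕ) : Bool := a % 3 == 0 || b % 3 == 0
def P2 (a b : ℕ) : Bool := (a + b) % 2 == 1 && (a % 4 == 0 || b % 4 == 0)
def core1 (a : ℕ) : Bool := a % 3 != 1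
def core2 (a : ℕ) : Bool := a % 2 == 0

def usl (blk : Bool) (j : ℕ) : ℕ :=
  match blk, j with
  | true, 0 => 9
  | true, 1 => 11
  | true, 2 => 5
  | true, _ => 3
  | false, j => if j % 2 = 0 then 4 else 10

def vsl (st : Fin 3) (k : ℕ) : ℕ :=
  match st, k with
  | 0, 0 => 2
  | 0, 1 => 6
  | 0, 2 => 0
  | 0, _ => 8
  | 1, k => if k < 2 then 1 else 7
  | 2, k => if k = 0 then 1 else 7

def msl (j : ℕ) : ℕ :=
  match j with
  | 0 => 1
  | 1 => 3
  | 2 => 7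
  | _ => 5

def us1 (r a : ℕ) : ℕ := usl (decide (a / 4 = r)) (a % 4)
def vst (m r b : ℕ) : Fin 3 := if b / 4 = r then 0 else if b / 4 = m then 2 else 1
def vs1 (m r b : ℕ) : ℕ := vsl (vst m r b) (b % 4)
def us2 (m a : ℕ) : ℕ := if a / 4 < m then msl (a % 4) else if a % 4 = 0 then 6 else 2
def vs2 (m b : ℕ) : ℕ := if b / 4 < m then msl (b % 4) else if b % 4 = 0 then 0 else 4

def Ok (L : List (ℕ × ℕ)) (x y : ℕ) : Prop := (x, y) ∈ L ∨ (y, x) ∈ L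

instance (L : List (ℕ × ℕ)) (x y : ℕ) : Decidable (Ok L x y) := by unfold Ok; infer_instance

set_option synthInstance.maxHeartbeats 400000 in
set_option synthInstance.maxSize 1000 in
theorem usl_core : ∀ s t : Bool, ∀ j < 4, ∀ k < 4, core1 (usl s j) = true → usl s j = usl t k →
    s = true ∧ t = true ∧ j = k := by decide

set_option synthInstance.maxHeartbeats 400000 in
set_option synthInstance.maxSize 1000 in
theorem vsl_core : ∀ s t : Fin 3, ∀ j < 4, ∀ k < 4, core1 (vsl s j) = true → vsl s j = vsl t k →
    s = 0 ∧ t = 0 ∧ j = k := by decide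

theorem uvsl_core : ∀ (s : Bool) (t : Fin 3), ∀ j < 4, ∀ k < 4, core1 (usl s j) = true →
    usl s j ≠ vsl t k := by decide

theorem vst_zero {m r b : ℕ} (h : vst m r b = 0) : b / 4 = r := by
  unfold vst at h; split_ifs at h with h1 h2
  · exact h1
  · exact absurd h (by decide)
  · exact absurd h (by decide)

theorem planar1 {n : ℕ} (m r : ℕ) :
    IsPlanar (bip (n := n) fun a b => Ok L1 (us1 r a) (vs1 m r b)) := by
  refine bip_planar _ (us1 r) (vs1 m r) L1 P1 core1 ?_ ?_ ?_ (by decide) (by decide)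
    (fun a b h => Or.inl h)
  · intro a b _ _ h h'
    obtain ⟨h1, h2, h3⟩ := usl_core _ _ _ (Nat.mod_lt _ (by norm_num)) _
      (Nat.mod_lt _ (by norm_num)) h h'
    simp only [decide_eq_true_eq] at h1 h2
    omega
  · intro a b _ _ h h'
    obtain ⟨h1, h2, h3⟩ := vsl_core _ _ _ (Nat.mod_lt _ (by norm_num)) _
      (Nat.mod_lt _ (by norm_num)) h h'
    have := vst_zero h1
    have := vst_zero h2
    omega
  · intro a b _ _ h
    exact uvsl_core _ _ _ (Nat.mod_lt _ (by norm_num)) _ (Nat.mod_lt _ (by norm_num)) h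

theorem msl_odd (j : ℕ) : msl j % 2 = 1 := by unfold msl; split <;> rfl

theorem planar2 {n : ℕ} (m : ℕ) (hn : n ≤ 4 * m + 2) :
    IsPlanar (bip (n := n) fun a b => Ok L2 (us2 m a) (vs2 m b) ∨ (a = b ∧ (a : ℕ) / 4 < m)) := by
  refine bip_planar _ (us2 m) (vs2 m) L2 P2 core2 ?_ ?_ ?_ (by decide) (by decide) ?_
  · intro a b ha hb h h'
    have h1 := msl_odd (a % 4)
    have h2 := msl_odd (b % 4)
    simp only [core2, beq_iff_eq, us2] at h h'
    split_ifs at h h' <;> omega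
  · intro a b ha hb h h'
    have h1 := msl_odd (a % 4)
    have h2 := msl_odd (b % 4)
    simp only [core2, beq_iff_eq, vs2] at h h'
    split_ifs at h h' <;> omega
  · intro a b ha hb h h'
    have h1 := msl_odd (a % 4)
    have h2 := msl_odd (b % 4)
    simp only [core2, beq_iff_eq, us2, vs2] at h h'
    split_ifs at h h' <;> omega
  · rintro a b (h | ⟨rfl, h⟩)
    · exact Or.inl h
    · exact Or.inr ⟨rfl, by simp [us2, vs2, h]⟩

theorem cov1 : ∀ j < 4, ∀ k < 4, j ≠ k → Ok L1 (usl true j) (vsl 0 k) := by decide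
theorem cov2 : ∀ j < 4, ∀ k < 4, Ok L1 (usl true j) (vsl 1 k) ∨ Ok L1 (usl false j) (vsl 0 k) := by
  decide
theorem cov3 : ∀ j < 2, ∀ k < 4, Ok L1 (usl false j) (vsl 0 k) ∨
    Ok L2 (if j = 0 then 6 else 2) (msl k) := by decide
theorem cov4 : ∀ j < 4, ∀ k < 2, Ok L1 (usl true j) (vsl 2 k) ∨
    Ok L2 (msl j) (if k = 0 then 0 else 4) := by decide
theorem cov5 : ∀ j < 2, ∀ k < 2, Ok L2 (if j = 0 then 6 else 2) (if k = 0 then 0 else 4) := by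
  decide

theorem cover {n m : ℕ} (hn : n ≤ 4 * m + 2) (a b : ℕ) (ha : a < n) (hb : b < n) :
    (∃ r < m, Ok L1 (us1 r a) (vs1 m r b)) ∨ Ok L2 (us2 m a) (vs2 m b) ∨ (a = b ∧ a / 4 < m) := by
  have ja : a % 4 < 4 := Nat.mod_lt _ (by norm_num)
  have jb : b % 4 < 4 := Nat.mod_lt _ (by norm_num)
  by_cases h1 : a / 4 < m <;> by_cases h2 : b / 4 < m
  · by_cases h3 : a / 4 = b / 4
    · by_cases h4 : a = b
      · exact Or.inr (Or.inr ⟨h4, h1⟩)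
      · refine Or.inl ⟨a / 4, h1, ?_⟩
        have := cov1 _ ja _ jb (by omega)
        simpa [us1, vs1, vst, h3] using this
    · rcases cov2 _ ja _ jb with h | h
      · refine Or.inl ⟨a / 4, h1, ?_⟩
        simpa [us1, vs1, vst, Ne.symm h3, h2.ne] using h
      · refine Or.inl ⟨b / 4, h2, ?_⟩
        simpa [us1, vs1, vst, h3] using h
  · have h4 : b / 4 = m := by omega
    rcases cov4 _ ja _ (show b % 4 < 2 by omega) with h | h
    · refine Or.inl ⟨a / 4, h1, ?_⟩
      simpa [us1, vs1, vst, h4, h1.ne'] using h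
    · right; left; simpa [us2, vs2, h1, h2] using h
  · have h4 : a / 4 = m := by omega
    rcases cov3 _ (show a % 4 < 2 by omega) _ jb with h | h
    · refine Or.inl ⟨b / 4, h2, ?_⟩
      simpa [us1, vs1, vst, h4, h2.ne'] using h
    · right; left; simpa [us2, vs2, h1, h2] using h
  · right; left
    simpa [us2, vs2, h1, h2] using cov5 _ (show a % 4 < 2 by omega) _ (show b % 4 < 2 by omega)

theorem upper {n m : ℕ} (hn : n ≤ 4 * m + 2) :
    ∃ H : Fin (m + 1) → SimpleGraph (Fin n ⊕ Fin n),
      (∀ i, H i ≤ completeBipartiteGraph (Fin n) (Fin n)) ∧ (∀ i, IsPlanar (H i)) ∧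
      (⨆ i, H i) = completeBipartiteGraph (Fin n) (Fin n) := by
  let H : Fin (m + 1) → SimpleGraph (Fin n ⊕ Fin n) := fun i =>
    if (i : ℕ) < m then bip fun a b => Ok L1 (us1 i a) (vs1 m i b)
    else bip fun a b => Ok L2 (us2 m a) (vs2 m b) ∨ (a = b ∧ (a : ℕ) / 4 < m)
  have hle : ∀ i, H i ≤ completeBipartiteGraph (Fin n) (Fin n) := by
    intro i; simp only [H]; split_ifs <;> exact bip_le _
  refine ⟨H, hle, ?_, le_antisymm (iSup_le hle) ?_⟩
  · intro i; simp only [H]; split_ifs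
    · exact planar1 m i
    · exact planar2 m hn
  · have key : ∀ a b : Fin n, (⨆ i, H i).Adj (Sum.inl a) (Sum.inr b) := by
      intro a b
      rw [SimpleGraph.iSup_adj]
      rcases cover hn a b a.2 b.2 with ⟨r, hr, h⟩ | h
      · refine ⟨⟨r, by omega⟩, ?_⟩
        simp only [H, if_pos hr]
        exact ⟨a, b, h, Or.inl ⟨rfl, rfl⟩⟩
      · refine ⟨⟨m, by omega⟩, ?_⟩
        simp only [H, lt_irrefl, if_false]
        exact ⟨a, b, h.imp id (fun h => ⟨Fin.ext h.1, h.2⟩), Or.inl ⟨rfl, rfl⟩⟩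
    rintro (a | a) (b | b) h
    · simp at h
    · exact key a b
    · exact (key b a).symm
    · simp at h

theorem thickness_completeBipartite (n : ℕ) (hn : 1 ≤ n) :
    (thickness (completeBipartiteGraph (Fin n) (Fin n)) : ℤ) = ⌈((n : ℚ) + 2) / 4⌉ := by
  obtain ⟨m, h1, h2⟩ : ∃ m, n ≤ 4 * m + 2 ∧ 4 * m ≤ n + 1 := ⟨(n + 1) / 4, by omega, by omega⟩
  have hth : thickness (completeBipartiteGraph (Fin n) (Fin n)) = m + 1 := by
    refine le_antisymm (Nat.sInf_le (upper h1)) (le_csInf ⟨_, upper h1⟩ ?_)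
    rintro t ⟨H, -, hP, hu⟩
    have := lower hn H hP hu
    omega
  rw [hth]
  symm
  rw [Int.ceil_eq_iff]
  have h1' : (n : ℚ) ≤ 4 * m + 2 := by exact_mod_cast h1
  have h2' : (4 : ℚ) * m ≤ n + 1 := by exact_mod_cast h2
  push_cast
  constructor <;> linarith
end

section
/- For every n ≥ 1 with n ≡ 0 (mod 4) or n ≡ 3 (mod 4), the thickness of the complete tripartite graph K_{1,n,n} equals ⌈(n+2)/4⌉. -/
open SimpleGraph

namespace ThickAux

lemma planar_of_book {V : Type*} (G : SimpleGraph V) (pos : V → ℝ)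
    (inj : Function.Injective pos) (A B : ℝ → ℝ → Prop)
    (hG : ∀ x y, G.Adj x y → pos x < pos y → A (pos x) (pos y) ∨ B (pos x) (pos y))
    (hA : ∀ a b c d, A a b → A c d → ¬ (a < c ∧ c < b ∧ b < d))
    (hB : ∀ a b c d, B a b → B c d → ¬ (a < c ∧ c < b ∧ b < d)) : IsPlanar G := by
  classical
  have h1 : ∀ e : G.edgeSet, ∃ u v : V, (e : Sym2 V) = s(u, v) ∧ pos u < pos v ∧ G.Adj u v := by
    rintro ⟨e, he⟩
    induction e using Sym2.ind with
    | _ x y =>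
      have hxy : G.Adj x y := he
      rcases lt_trichotomy (pos x) (pos y) with h | h | h
      · exact ⟨x, y, rfl, h, hxy⟩
      · exact absurd (inj h) hxy.ne
      · exact ⟨y, x, Sym2.eq_swap, h, hxy.symm⟩
  choose u v he hlt hadj using h1
  let σ : G.edgeSet → ℝ := fun e => if A (pos (u e)) (pos (v e)) then 1 else -1
  have hσ : ∀ e, σ e ≠ 0 := by
    intro e; simp only [σ]; split_ifs <;> norm_num
  let X : G.edgeSet → ℝ → ℝ := fun e t => pos (u e) + t * (pos (v e) - pos (u e))
  refine ⟨fun x => (pos x, 0), fun e t => (X e t, σ e * ((X e t - pos (u e)) * (pos (v e) - X e t))),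
    ?_, ?_, ?_, ?_, ?_, ?_⟩
  · intro x y h; exact inj (congrArg Prod.fst h)
  · intro e; simp only [X]; fun_prop
  · intro e
    refine ⟨u e, v e, he e, ?_, ?_⟩
    · simp [X]
    · simp [X]
  · intro e s t h
    have h2 := congrArg Prod.fst h
    simp only [X] at h2
    have h3 : ((s : ℝ) - t) * (pos (v e) - pos (u e)) = 0 := by linarith
    rcases mul_eq_zero.1 h3 with h4 | h4
    · exact Subtype.ext (by linarith)
    · linarith [hlt e]
  · intro e t h0 h1 x h
    have h2 := congrArg Prod.snd h
    simp only [X] at h2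
    have h3 := hlt e
    rcases mul_eq_zero.1 h2 with h4 | h4
    · exact hσ e h4
    rcases mul_eq_zero.1 h4 with h4 | h4
    · have : (t : ℝ) * (pos (v e) - pos (u e)) = 0 := by linarith
      rcases mul_eq_zero.1 this with h5 | h5
      · exact h0 h5
      · linarith
    · have : (1 - (t : ℝ)) * (pos (v e) - pos (u e)) = 0 := by linarith
      rcases mul_eq_zero.1 this with h5 | h5
      · exact h1 (by linarith)
      · linarith
  · intro e e' hne s t h
    have hx : X e s = X e' t := congrArg Prod.fst h
    have hy := congrArg Prod.snd h
    simp only at hy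
    by_contra hr
    have hs0 : X e s ≠ pos (u e) := by
      intro h5; exact hr ⟨u e, by simp [h5]⟩
    have hs1 : X e s ≠ pos (v e) := by
      intro h5; exact hr ⟨v e, by simp [h5]⟩
    have ht0 : X e' t ≠ pos (u e') := by
      intro h5; rw [h] at hr; exact hr ⟨u e', by simp [h5]⟩
    have ht1 : X e' t ≠ pos (v e') := by
      intro h5; rw [h] at hr; exact hr ⟨v e', by simp [h5]⟩
    have bd : ∀ (e : G.edgeSet) (s : Set.Icc (0:ℝ) 1), pos (u e) ≤ X e s ∧ X e s ≤ pos (v e) := by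
      intro e s
      have := s.2.1; have := s.2.2; have := hlt e
      simp only [X]
      constructor <;> nlinarith
    have s0 := lt_of_le_of_ne (bd e s).1 hs0.symm
    have s1 := lt_of_le_of_ne (bd e s).2 hs1
    have t0 := lt_of_le_of_ne (bd e' t).1 ht0.symm
    have t1 := lt_of_le_of_ne (bd e' t).2 ht1
    rw [← hx] at t0 t1 hy
    generalize X e s = x at *
    have p1 : 0 < (x - pos (u e)) * (pos (v e) - x) := mul_pos (by linarith) (by linarith)
    have p2 : 0 < (x - pos (u e')) * (pos (v e') - x) := mul_pos (by linarith) (by linarith)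
    have hne' : ¬ (pos (u e) = pos (u e') ∧ pos (v e) = pos (v e')) := by
      rintro ⟨h6, h7⟩
      apply hne
      apply Subtype.ext
      rw [he e, he e', inj h6, inj h7]
    have key : (x - pos (u e)) * (pos (v e) - x) = (x - pos (u e')) * (pos (v e') - x) ∧
       (¬ (pos (u e) < pos (u e') ∧ pos (u e') < pos (v e) ∧ pos (v e) < pos (v e'))) ∧
       (¬ (pos (u e') < pos (u e) ∧ pos (u e) < pos (v e') ∧ pos (v e') < pos (v e))) := by
      have hg := hG _ _ (hadj e) (hlt e)
      have hg' := hG _ _ (hadj e') (hlt e')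
      simp only [σ] at hy
      split_ifs at hy with c1 c2 c2
      · exact ⟨by linarith, hA _ _ _ _ c1 c2, hA _ _ _ _ c2 c1⟩
      · linarith
      · linarith
      · exact ⟨by linarith, hB _ _ _ _ (hg.resolve_left c1) (hg'.resolve_left c2),
          hB _ _ _ _ (hg'.resolve_left c2) (hg.resolve_left c1)⟩
    obtain ⟨k1, k2, k3⟩ := key
    clear hy hr
    generalize pos (u e) = a at *
    generalize pos (v e) = b at *
    generalize pos (u e') = c at *
    generalize pos (v e') = d at *
    rcases lt_trichotomy a c with q | q | q
    · have : d ≤ b := by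
        by_contra hh; exact k2 ⟨q, by linarith, by linarith⟩
      nlinarith
    · subst q
      have : b - x = d - x := mul_left_cancel₀ (by linarith : x - a ≠ 0) k1
      exact hne' ⟨rfl, by linarith⟩
    · have : b ≤ d := by
        by_contra hh; exact k3 ⟨q, by linarith, by linarith⟩
      nlinarith

/-- page A -/
def PA (a b : ℝ) : Prop :=
  (b = 3 ∧ 0 ≤ a ∧ a ≤ 1) ∨ (a = 1 ∧ 2 ≤ b ∧ b ≤ 3) ∨ (b = 7 ∧ 4 ≤ a ∧ a ≤ 5) ∨
    (a = 5 ∧ 6 ≤ b ∧ b ≤ 7)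
/-- page B -/
def PB (a b : ℝ) : Prop :=
  (b = 6 ∧ 0 ≤ a ∧ a ≤ 1) ∨ (b = 4 ∧ 2 ≤ a ∧ a ≤ 3) ∨ (a = 2 ∧ 4 ≤ b ∧ b ≤ 5) ∨
    (a = 0 ∧ 6 ≤ b ∧ b ≤ 7)

lemma PA_nc : ∀ a b c d, PA a b → PA c d → ¬ (a < c ∧ c < b ∧ b < d) := by
  rintro a b c d (⟨h1, h2, h3⟩ | ⟨h1, h2, h3⟩ | ⟨h1, h2, h3⟩ | ⟨h1, h2, h3⟩)
    (⟨h4, h5, h6⟩ | ⟨h4, h5, h6⟩ | ⟨h4, h5, h6⟩ | ⟨h4, h5, h6⟩) ⟨h7, h8, h9⟩ <;> linarith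

lemma PB_nc : ∀ a b c d, PB a b → PB c d → ¬ (a < c ∧ c < b ∧ b < d) := by
  rintro a b c d (⟨h1, h2, h3⟩ | ⟨h1, h2, h3⟩ | ⟨h1, h2, h3⟩ | ⟨h1, h2, h3⟩)
    (⟨h4, h5, h6⟩ | ⟨h4, h5, h6⟩ | ⟨h4, h5, h6⟩ | ⟨h4, h5, h6⟩) ⟨h7, h8, h9⟩ <;> linarith

lemma planar_page {V : Type*} (K : SimpleGraph V) (pos : V → ℝ)
    (inj : Function.Injective pos) (A B : ℝ → ℝ → Prop)
    (hA : ∀ a b c d, A a b → A c d → ¬ (a < c ∧ c < b ∧ b < d))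
    (hB : ∀ a b c d, B a b → B c d → ¬ (a < c ∧ c < b ∧ b < d)) :
    ∃ H : SimpleGraph V, H ≤ K ∧ IsPlanar H ∧ ∀ x y, K.Adj x y → pos x < pos y →
      (A (pos x) (pos y) ∨ B (pos x) (pos y)) → H.Adj x y := by
  refine ⟨⟨fun x y => K.Adj x y ∧ ((pos x < pos y ∧ (A (pos x) (pos y) ∨ B (pos x) (pos y))) ∨
    (pos y < pos x ∧ (A (pos y) (pos x) ∨ B (pos y) (pos x)))), ?_, ?_⟩, ?_, ?_, ?_⟩
  · exact ⟨fun x y h => ⟨h.1.symm, h.2.symm⟩⟩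
  · exact ⟨fun x h => K.loopless.irrefl x h.1⟩
  · intro x y h; exact h.1
  · apply planar_of_book _ pos inj A B _ hA hB
    rintro x y ⟨h, h2 | h2⟩ h3
    · exact h2.2
    · linarith [h2.1]
  · intro x y h h2 h3
    exact ⟨h, Or.inl ⟨h2, h3⟩⟩

/-- fraction -/
noncomputable def fr (a : ℕ) : ℝ := 1 / ((a : ℝ) + 2)

lemma fr_pos (a : ℕ) : 0 < fr a := by unfold fr; positivity
lemma fr_lt (a : ℕ) : fr a < 1 := by
  unfold fr; rw [div_lt_one (by positivity)]; linarith [(Nat.cast_nonneg a : (0:ℝ) ≤ a)]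
lemma fr_inj {a b : ℕ} (h : fr a = fr b) : a = b := by
  unfold fr at h
  rw [div_eq_div_iff (by positivity) (by positivity)] at h
  exact_mod_cast (by linarith : (a : ℝ) = b)

/-- positions of the vertices of the first part, in layer `r` -/
noncomputable def posU (r a : ℕ) : ℝ :=
  if a / 4 = r then
    (if a % 4 = 0 then 3 else if a % 4 = 1 then 6 else if a % 4 = 2 then 2 else 7)
  else if a % 4 = 0 ∨ a % 4 = 1 then 2 + fr a else 6 + fr a

/-- positions of the vertices of the second part, in layer `r` -/
noncomputable def posV (r a : ℕ) : ℝ :=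
  if a / 4 = r then
    (if a % 4 = 0 then 5 else if a % 4 = 1 then 4 else if a % 4 = 2 then 0 else 1)
  else if a % 4 = 0 ∨ a % 4 = 2 then fr a else 4 + fr a

lemma posU_inj (r a b : ℕ) (h : posU r a = posU r b) : a = b := by
  have h1 := fr_pos a; have h2 := fr_lt a; have h3 := fr_pos b; have h4 := fr_lt b
  unfold posU at h
  split_ifs at h <;> first | omega | (exfalso; linarith) | exact fr_inj (by linarith)

lemma posV_inj (r a b : ℕ) (h : posV r a = posV r b) : a = b := by
  have h1 := fr_pos a; have h2 := fr_lt a; have h3 := fr_pos b; have h4 := fr_lt b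
  unfold posV at h
  split_ifs at h <;> first | omega | (exfalso; linarith) | exact fr_inj (by linarith)

lemma posUV (r a b : ℕ) : posU r a ≠ posV r b := by
  intro h
  have h1 := fr_pos a; have h2 := fr_lt a; have h3 := fr_pos b; have h4 := fr_lt b
  unfold posU posV at h
  split_ifs at h <;> linarith

lemma posU_bd (r a : ℕ) : posU r a < 100 := by
  have h2 := fr_lt a
  unfold posU
  split_ifs <;> linarith
lemma posV_bd (r a : ℕ) : posV r a < 100 := by
  have h2 := fr_lt a
  unfold posV
  split_ifs <;> linarith

/-- an edge is drawn in the layer -/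
def Dr (x y : ℝ) : Prop := (x < y ∧ (PA x y ∨ PB x y)) ∨ (y < x ∧ (PA y x ∨ PB y x))

lemma cover_same (r a b : ℕ) (ha : a / 4 = r) (hb : b / 4 = r) (hab : a % 4 ≠ b % 4) :
    Dr (posU r a) (posV r b) := by
  have h1 : a % 4 = 0 ∨ a % 4 = 1 ∨ a % 4 = 2 ∨ a % 4 = 3 := by omega
  have h2 : b % 4 = 0 ∨ b % 4 = 1 ∨ b % 4 = 2 ∨ b % 4 = 3 := by omega
  unfold posU posV
  rw [if_pos ha, if_pos hb]
  rcases h1 with h1 | h1 | h1 | h1 <;> rcases h2 with h2 | h2 | h2 | h2 <;>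
    first | omega | (rw [h1, h2]; norm_num [Dr, PA, PB])

lemma cover_u (a b : ℕ) (hne : a / 4 ≠ b / 4)
    (h : (a % 4 < 2 ∧ b % 2 = 0) ∨ (2 ≤ a % 4 ∧ b % 2 = 1)) :
    Dr (posU (a / 4) a) (posV (a / 4) b) := by
  have h3 := fr_pos b; have h4 := fr_lt b
  have h1 : a % 4 = 0 ∨ a % 4 = 1 ∨ a % 4 = 2 ∨ a % 4 = 3 := by omega
  have h2 : b % 4 = 0 ∨ b % 4 = 1 ∨ b % 4 = 2 ∨ b % 4 = 3 := by omega
  unfold posU posV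
  rw [if_pos rfl, if_neg hne.symm]
  rcases h1 with h1 | h1 | h1 | h1 <;> rcases h2 with h2 | h2 | h2 | h2 <;>
    first | omega | skip
  all_goals
    simp only [h1, h2]
    norm_num [Dr, PA, PB]
    grind

lemma cover_v (a b : ℕ) (hne : a / 4 ≠ b / 4)
    (h : ¬ ((a % 4 < 2 ∧ b % 2 = 0) ∨ (2 ≤ a % 4 ∧ b % 2 = 1))) :
    Dr (posU (b / 4) a) (posV (b / 4) b) := by
  have h3 := fr_pos a; have h4 := fr_lt a
  have h1 : a % 4 = 0 ∨ a % 4 = 1 ∨ a % 4 = 2 ∨ a % 4 = 3 := by omega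
  have h2 : b % 4 = 0 ∨ b % 4 = 1 ∨ b % 4 = 2 ∨ b % 4 = 3 := by omega
  unfold posU posV
  rw [if_neg hne, if_pos rfl]
  rcases h1 with h1 | h1 | h1 | h1 <;> rcases h2 with h2 | h2 | h2 | h2 <;>
    first | omega | skip
  all_goals
    simp only [h1, h2]
    norm_num [Dr, PA, PB]
    grind

/-- the vertex type -/
abbrev VT (n : ℕ) := Σ i : Fin 3, (![Fin 1, Fin n, Fin n] : Fin 3 → Type) i

/-- index -/
def idx (n : ℕ) : VT n → ℕ
  | ⟨0, a⟩ => (show Fin 1 from a).val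
  | ⟨1, a⟩ => (show Fin n from a).val
  | ⟨2, a⟩ => (show Fin n from a).val

lemma idx_inj (n : ℕ) (x y : VT n) (h1 : x.1 = y.1) (h2 : idx n x = idx n y) : x = y := by
  obtain ⟨i, a⟩ := x
  obtain ⟨j, b⟩ := y
  obtain rfl : i = j := h1
  fin_cases i
  all_goals
    have := Fin.ext (show Fin.val _ = Fin.val _ from h2)
    exact congrArg _ this

lemma idx_lt (n : ℕ) (x : VT n) (h : x.1 ≠ 0) : idx n x < n := by
  obtain ⟨i, a⟩ := x
  fin_cases i
  · exact absurd rfl h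
  · exact (show Fin n from a).isLt
  · exact (show Fin n from a).isLt

lemma idx_zero (n : ℕ) (x : VT n) (h : x.1 = 0) : idx n x = 0 := by
  obtain ⟨i, a⟩ := x
  obtain rfl : i = 0 := h
  have : (show Fin 1 from a).val < 1 := (show Fin 1 from a).isLt
  have h2 : idx n ⟨0, a⟩ = (show Fin 1 from a).val := rfl
  omega

/-- position in layer r -/
noncomputable def posr (n r : ℕ) (x : VT n) : ℝ :=
  if x.1 = 0 then 100 else if x.1 = 1 then posU r (idx n x) else posV r (idx n x)

/-- position in last layer -/
noncomputable def posl (n : ℕ) (x : VT n) : ℝ :=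
  if x.1 = 0 then 0 else if x.1 = 1 then (2 * idx n x + 1 : ℕ) else (2 * idx n x + 2 : ℕ)

lemma posr_inj (n r : ℕ) : Function.Injective (posr n r) := by
  intro x y h
  have c1 : x.1 = 0 ∨ x.1 = 1 ∨ x.1 = 2 := by
    generalize x.1 = i; revert i; decide
  have c2 : y.1 = 0 ∨ y.1 = 1 ∨ y.1 = 2 := by
    generalize y.1 = i; revert i; decide
  unfold posr at h
  rcases c1 with c1 | c1 | c1 <;> rcases c2 with c2 | c2 | c2 <;> simp [c1, c2] at h
  · exact idx_inj n x y (by rw [c1, c2]) (by rw [idx_zero n x c1, idx_zero n y c2])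
  · linarith [posU_bd r (idx n y)]
  · linarith [posV_bd r (idx n y)]
  · linarith [posU_bd r (idx n x)]
  · exact idx_inj n x y (by rw [c1, c2]) (posU_inj r _ _ h)
  · exact absurd h (posUV _ _ _)
  · linarith [posV_bd r (idx n x)]
  · exact absurd h.symm (posUV _ _ _)
  · exact idx_inj n x y (by rw [c1, c2]) (posV_inj r _ _ h)

lemma posl_inj (n : ℕ) : Function.Injective (posl n) := by
  intro x y h
  have c1 : x.1 = 0 ∨ x.1 = 1 ∨ x.1 = 2 := by
    generalize x.1 = i; revert i; decide
  have c2 : y.1 = 0 ∨ y.1 = 1 ∨ y.1 = 2 := by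
    generalize y.1 = i; revert i; decide
  unfold posl at h
  rcases c1 with c1 | c1 | c1 <;> rcases c2 with c2 | c2 | c2 <;> simp [c1, c2] at h <;>
    norm_cast at h <;> try omega
  · exact idx_inj n x y (by rw [c1, c2]) (by rw [idx_zero n x c1, idx_zero n y c2])
  · exact idx_inj n x y (by rw [c1, c2]) h
  · exact idx_inj n x y (by rw [c1, c2]) h

lemma upper (n p : ℕ) (hnp : n ≤ 4 * p) :
    ∃ H : Fin (p + 1) → SimpleGraph (VT n),
      (∀ i, H i ≤ completeMultipartiteGraph ![Fin 1, Fin n, Fin n]) ∧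
      (∀ i, IsPlanar (H i)) ∧
      (⨆ i, H i) = completeMultipartiteGraph ![Fin 1, Fin n, Fin n] := by
  set K : SimpleGraph (VT n) := completeMultipartiteGraph ![Fin 1, Fin n, Fin n] with hK
  have hadj : ∀ x y : VT n, K.Adj x y ↔ x.1 ≠ y.1 := fun x y => Iff.rfl
  have h1 : ∀ r : ℕ, ∃ H : SimpleGraph (VT n), H ≤ K ∧ IsPlanar H ∧ ∀ x y, K.Adj x y →
      Dr (posr n r x) (posr n r y) → H.Adj x y := by
    intro r
    obtain ⟨H, a, b, c⟩ := planar_page K (posr n r) (posr_inj n r) PA PB PA_nc PB_nc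
    refine ⟨H, a, b, ?_⟩
    rintro x y h (h2 | h2)
    · exact c x y h h2.1 h2.2
    · exact (c y x h.symm h2.1 h2.2).symm
  choose F hF1 hF2 hF3 using h1
  obtain ⟨L, hL1, hL2, hL3⟩ := planar_page K (posl n) (posl_inj n) (fun a _ => a = 0)
    (fun a b => b = a + 1 ∧ ∃ k : ℕ, a = 2 * k + 1)
    (by rintro a b c d h1 h2 ⟨h3, h4, h5⟩; linarith)
    (by
      rintro a b c d ⟨h1, k, h6⟩ ⟨h2, l, h7⟩ ⟨h3, h4, h5⟩
      subst h6 h7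
      have h8 : k < l := by
        have : (k : ℝ) < l := by linarith
        exact_mod_cast this
      have h9 : (k : ℝ) + 1 ≤ l := by exact_mod_cast h8
      linarith)
  let H : Fin (p + 1) → SimpleGraph (VT n) := fun i => if (i : ℕ) < p then F i else L
  have hH1 : ∀ i, H i ≤ K := by
    intro i; simp only [H]; split_ifs
    · exact hF1 _
    · exact hL1
  refine ⟨H, hH1, ?_, ?_⟩
  · intro i; simp only [H]; split_ifs
    · exact hF2 _
    · exact hL2
  apply le_antisymm (iSup_le hH1)
  have last : L ≤ ⨆ i, H i := by
    have : H (Fin.last p) = L := by simp [H]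
    rw [← this]; exact le_iSup H _
  have lay : ∀ r < p, F r ≤ ⨆ i, H i := by
    intro r hr
    have : H ⟨r, by omega⟩ = F r := by simp [H, hr]
    rw [← this]; exact le_iSup H _
  have uv : ∀ x y : VT n, x.1 = 1 → y.1 = 2 → (⨆ i, H i).Adj x y := by
    intro x y hx hy
    have hxy : K.Adj x y := by rw [hadj, hx, hy]; decide
    have bx := idx_lt n x (by rw [hx]; decide)
    have by' := idx_lt n y (by rw [hy]; decide)
    have px : ∀ r, posr n r x = posU r (idx n x) := by intro r; simp [posr, hx]
    have py : ∀ r, posr n r y = posV r (idx n y) := by intro r; simp [posr, hy]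
    by_cases e : idx n x / 4 = idx n y / 4
    · by_cases e2 : idx n x % 4 = idx n y % 4
      · have e3 : idx n x = idx n y := by omega
        apply last
        have q1 : posl n x = 2 * (idx n x : ℝ) + 1 := by simp [posl, hx]
        have q2 : posl n y = 2 * (idx n x : ℝ) + 2 := by simp [posl, hy, e3]
        apply hL3 x y hxy
        · rw [q1, q2]; linarith
        · right; exact ⟨by rw [q1, q2]; ring, idx n x, q1⟩
      · apply lay (idx n x / 4) (by omega)
        apply hF3 _ _ _ hxy
        rw [px, py]
        exact cover_same _ _ _ rfl e.symm e2
    · by_cases e2 : (idx n x % 4 < 2 ∧ idx n y % 2 = 0) ∨ (2 ≤ idx n x % 4 ∧ idx n y % 2 = 1)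
      · apply lay (idx n x / 4) (by omega)
        apply hF3 _ _ _ hxy
        rw [px, py]
        exact cover_u _ _ e e2
      · apply lay (idx n y / 4) (by omega)
        apply hF3 _ _ _ hxy
        rw [px, py]
        exact cover_v _ _ e e2
  have xv : ∀ x y : VT n, x.1 = 0 → y.1 ≠ 0 → (⨆ i, H i).Adj x y := by
    intro x y hx hy
    have hxy : K.Adj x y := by rw [hadj, hx]; exact hy.symm
    apply last
    have q1 : posl n x = 0 := by simp [posl, hx]
    apply hL3 x y hxy
    · rw [q1]; unfold posl; rw [if_neg hy]
      split_ifs <;> exact_mod_cast (by omega)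
    · exact Or.inl q1
  intro x y hxy
  rw [hadj] at hxy
  have c1 : x.1 = 0 ∨ x.1 = 1 ∨ x.1 = 2 := by
    generalize x.1 = i; revert i; decide
  have c2 : y.1 = 0 ∨ y.1 = 1 ∨ y.1 = 2 := by
    generalize y.1 = i; revert i; decide
  by_cases h0 : x.1 = 0
  · exact xv x y h0 (by rw [← h0]; exact hxy.symm)
  by_cases h0' : y.1 = 0
  · exact (xv y x h0' h0).symm
  rcases c1 with c1 | c1 | c1
  · exact absurd c1 h0
  · rcases c2 with c2 | c2 | c2
    · exact absurd c2 h0'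
    · exact absurd (c1.trans c2.symm) hxy
    · exact uv x y c1 c2
  · rcases c2 with c2 | c2 | c2
    · exact absurd c2 h0'
    · exact (uv y x c2 c1).symm
    · exact absurd (c1.trans c2.symm) hxy

section count
open Finset

lemma four_support {V E : Type*} [Fintype E] [DecidableEq V] (tail head : E → V) (col : V → Bool)
    (hcol : ∀ e, col (tail e) ≠ col (head e))
    (hs : ∀ e e', (tail e = tail e' ∧ head e = head e') ∨ (tail e = head e' ∧ head e = tail e') →
      e = e')
    (z : E → ZMod 2)
    (hz : ∀ v, ∑ e, ((if tail e = v then z e else 0) + (if head e = v then z e else 0)) = 0)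
    (e0 : E) (h0 : z e0 ≠ 0) :
    4 ≤ #{e | z e ≠ 0} := by
  classical
  have other : ∀ e v, z e ≠ 0 → (tail e = v ∨ head e = v) →
      ∃ e', e' ≠ e ∧ z e' ≠ 0 ∧ (tail e' = v ∨ head e' = v) := by
    intro e v he hv
    by_contra hcon
    push Not at hcon
    have := hz v
    rw [Finset.sum_eq_single e] at this
    · have hc := hcol e
      rcases hv with rfl | rfl
      · rw [if_pos rfl, if_neg (fun h => hc (by rw [h])), add_zero] at this
        exact he this
      · rw [if_pos rfl, if_neg (fun h => hc (by rw [h])), zero_add] at this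
        exact he this
    · intro b _ hb
      by_cases hzb : z b = 0
      · simp [hzb]
      · have := hcon b hb hzb
        rw [if_neg this.1, if_neg this.2, add_zero]
    · simp
  have sym : ∀ e v, (tail e = v ∨ head e = v) → ∃ w, col w ≠ col v ∧
      ((tail e = v ∧ head e = w) ∨ (tail e = w ∧ head e = v)) := by
    rintro e v (h | h)
    · exact ⟨head e, by rw [← h]; exact (hcol e).symm, Or.inl ⟨h, rfl⟩⟩
    · exact ⟨tail e, by rw [← h]; exact (hcol e), Or.inr ⟨rfl, h⟩⟩
  obtain ⟨e1, n1, z1, i1⟩ := other e0 (tail e0) h0 (Or.inl rfl)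
  obtain ⟨e2, n2, z2, i2⟩ := other e0 (head e0) h0 (Or.inr rfl)
  obtain ⟨b', cb', s1⟩ := sym e1 _ i1
  obtain ⟨a', ca', s2⟩ := sym e2 _ i2
  have i1' : tail e1 = b' ∨ head e1 = b' := by
    rcases s1 with s1 | s1
    · exact Or.inr s1.2
    · exact Or.inl s1.1
  obtain ⟨e3, n3, z3, i3⟩ := other e1 b' z1 i1'
  have hc0 := hcol e0
  have h12 : e1 ≠ e2 := by
    rintro rfl
    apply n1
    apply hs
    grind
  have h30 : e3 ≠ e0 := by
    rintro rfl
    apply n1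
    apply hs
    grind
  have h32 : e3 ≠ e2 := by
    rintro rfl
    have : col b' = col (head e0) := by
      revert cb' hc0
      cases col b' <;> cases col (head e0) <;> cases col (tail e0) <;> simp
    have : col a' = col (tail e0) := by
      revert ca' hc0
      cases col a' <;> cases col (head e0) <;> cases col (tail e0) <;> simp
    have hb : b' ≠ head e0 := by
      rintro rfl
      exact n1 (hs _ _ (by grind))
    grind
  have hcard : #({e0, e1, e2, e3} : Finset E) = 4 := by
    rw [card_insert_of_notMem, card_insert_of_notMem, card_insert_of_notMem, card_singleton]
    · simpa using h32.symm
    · simp only [mem_insert, mem_singleton, not_or]; exact ⟨h12, n3.symm⟩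
    · simp only [mem_insert, mem_singleton, not_or]; exact ⟨n1.symm, n2.symm, h30.symm⟩
  rw [← hcard]
  apply card_le_card
  intro e he
  simp only [mem_insert, mem_singleton] at he
  rw [mem_filter]
  refine ⟨mem_univ _, ?_⟩
  rcases he with rfl | rfl | rfl | rfl <;> assumption

/-- boundary map -/
def bdry {V E : Type*} [Fintype E] [DecidableEq V] (tail head : E → V) :
    (E → ZMod 2) →ₗ[ZMod 2] (V → ZMod 2) where
  toFun z v := ∑ e, ((if tail e = v then z e else 0) + (if head e = v then z e else 0))
  map_add' x y := by
    funext v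
    simp only [Pi.add_apply, ← Finset.sum_add_distrib]
    refine Finset.sum_congr rfl fun e _ => ?_
    split_ifs <;> ring
  map_smul' c x := by
    funext v
    simp only [Pi.smul_apply, smul_eq_mul, Finset.mul_sum, RingHom.id_apply]
    refine Finset.sum_congr rfl fun e _ => ?_
    split_ifs <;> ring

lemma dimZ {V E : Type*} [Fintype E] [Fintype V] [DecidableEq V] [Nonempty V] (tail head : E → V) :
    Fintype.card E + 1 ≤ Module.finrank (ZMod 2) (LinearMap.ker (bdry tail head)) + Fintype.card V := by
  classical
  have h1 := LinearMap.finrank_range_add_finrank_ker (bdry tail head)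
  rw [Module.finrank_pi] at h1
  let S : (V → ZMod 2) →ₗ[ZMod 2] ZMod 2 :=
    { toFun := fun y => ∑ v, y v
      map_add' := by intro x y; simp [Finset.sum_add_distrib]
      map_smul' := by intro c x; simp [Finset.mul_sum] }
  have hle : LinearMap.range (bdry tail head) ≤ LinearMap.ker S := by
    rintro _ ⟨z, rfl⟩
    rw [LinearMap.mem_ker]
    change ∑ v, ∑ e, ((if tail e = v then z e else 0) + (if head e = v then z e else 0)) = 0
    rw [Finset.sum_comm]
    refine Finset.sum_eq_zero fun e _ => ?_
    rw [Finset.sum_add_distrib]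
    simp [CharTwo.add_self_eq_zero]
  have h2 := Submodule.finrank_mono hle
  have h3 := LinearMap.finrank_range_add_finrank_ker S
  rw [Module.finrank_pi] at h3
  have hsurj : LinearMap.range S = ⊤ := by
    rw [LinearMap.range_eq_top]
    intro c
    obtain ⟨v⟩ := ‹Nonempty V›
    refine ⟨Pi.single v c, ?_⟩
    change ∑ w, (Pi.single v c : V → ZMod 2) w = c
    simp
  rw [hsurj, finrank_top, Module.finrank_self] at h3
  omega

lemma euler_count {V E F : Type*} [Fintype E] [Fintype V] [DecidableEq V] [DecidableEq F]
    (tail head : E → V) (col : V → Bool)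
    (hcol : ∀ e, col (tail e) ≠ col (head e))
    (hs : ∀ e e', (tail e = tail e' ∧ head e = head e') ∨ (tail e = head e' ∧ head e = tail e') →
      e = e')
    (hV : 3 ≤ Fintype.card V)
    (l r : E → F)
    (hb : ∀ f, bdry tail head (fun e => (if l e = f then 1 else 0) + (if r e = f then 1 else 0)) = 0)
    (ha : ∀ z, bdry tail head z = 0 → ∃ h : F → ZMod 2, ∀ e, z e = h (l e) + h (r e)) :
    Fintype.card E + 4 ≤ 2 * Fintype.card V := by
  classical
  haveI : Nonempty V := Fintype.card_pos_iff.1 (by omega)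
  have hdim := dimZ tail head
  let b : F → E → ZMod 2 := fun f e => (if l e = f then 1 else 0) + (if r e = f then 1 else 0)
  let F' : Finset F := (univ.image l ∪ univ.image r).filter (fun f => ∃ e, b f e ≠ 0)
  have hF' : ∀ e, l e ≠ r e → l e ∈ F' ∧ r e ∈ F' := by
    intro e hne
    simp only [F', mem_filter, mem_union, mem_image, mem_univ, true_and]
    exact ⟨⟨Or.inl ⟨e, rfl⟩, e, by simp [b, hne.symm]⟩, ⟨Or.inr ⟨e, rfl⟩, e, by simp [b, hne]⟩⟩
  have h4 : ∀ f ∈ F', 4 ≤ #{e | b f e ≠ 0} := by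
    intro f hf
    obtain ⟨e0, he0⟩ := (mem_filter.1 hf).2
    exact four_support tail head col hcol hs (b f) (fun v => congrFun (hb f) v) e0 he0
  have hcnt : 4 * #F' ≤ 2 * Fintype.card E := by
    calc 4 * #F' = ∑ f ∈ F', 4 := by rw [sum_const, smul_eq_mul, mul_comm]
      _ ≤ ∑ f ∈ F', #{e | b f e ≠ 0} := sum_le_sum h4
      _ = ∑ f ∈ F', ∑ e, (if b f e ≠ 0 then 1 else 0) := by simp only [card_filter]
      _ = ∑ e, ∑ f ∈ F', (if b f e ≠ 0 then 1 else 0) := sum_comm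
      _ ≤ ∑ e : E, 2 := by
        refine sum_le_sum fun e _ => ?_
        rw [← card_filter]
        refine (card_le_card (t := {l e, r e}) ?_).trans card_le_two
        intro f hf
        have := (mem_filter.1 hf).2
        by_contra hcon
        simp only [mem_insert, mem_singleton, not_or] at hcon
        apply this
        simp [b, Ne.symm hcon.1, Ne.symm hcon.2]
      _ = 2 * Fintype.card E := by rw [sum_const, smul_eq_mul, mul_comm]; rfl
  rcases F'.eq_empty_or_nonempty with hE | ⟨f0, hf0⟩
  · have : LinearMap.ker (bdry tail head) = ⊥ := by
      rw [eq_bot_iff]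
      intro z hz
      obtain ⟨h, hh⟩ := ha z hz
      rw [Submodule.mem_bot]
      funext e
      rw [hh e]
      by_cases hlr : l e = r e
      · rw [hlr]; exact CharTwo.add_self_eq_zero _
      · have := (hF' e hlr).1
        rw [hE] at this
        simp at this
    rw [this, finrank_bot] at hdim
    omega
  · have hspan : LinearMap.ker (bdry tail head) ≤
        Submodule.span (ZMod 2) (((F'.erase f0).image b : Finset (E → ZMod 2)) : Set (E → ZMod 2)) := by
      intro z hz
      obtain ⟨h, hh⟩ := ha z hz
      have hzeq : z = ∑ f ∈ F'.erase f0, (h f - h f0) • b f := by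
        funext e
        rw [hh e, Finset.sum_apply]
        simp only [Pi.smul_apply, smul_eq_mul]
        rw [Finset.sum_erase _ (by simp)]
        by_cases hlr : l e = r e
        · simp [b, hlr, CharTwo.add_self_eq_zero]
        · obtain ⟨q1, q2⟩ := hF' e hlr
          simp only [b, mul_add, mul_ite, mul_one, mul_zero, sum_add_distrib]
          rw [Finset.sum_ite_eq, Finset.sum_ite_eq, if_pos q1, if_pos q2]
          have : h f0 + h f0 = 0 := CharTwo.add_self_eq_zero _
          linear_combination this
      rw [hzeq]
      refine Submodule.sum_mem _ fun f hf => Submodule.smul_mem _ _ (Submodule.subset_span ?_)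
      exact mem_coe.2 (mem_image_of_mem _ hf)
    have h1 := Submodule.finrank_mono hspan
    have h2 := finrank_span_finset_le_card (R := ZMod 2) ((F'.erase f0).image b)
    have h3 : #((F'.erase f0).image b) ≤ #(F'.erase f0) := card_image_le
    rw [card_erase_of_mem hf0] at h3
    have h5 : 0 < #F' := card_pos.2 ⟨f0, hf0⟩
    unfold Set.finrank at h2
    omega

end count

section lattice
open Finset

/-- lattice adjacency -/
def LAdj (c d : ℤ × ℤ) : Prop :=
  (c.2 = d.2 ∧ (d.1 = c.1 + 1 ∨ c.1 = d.1 + 1)) ∨ (c.1 = d.1 ∧ (d.2 = c.2 + 1 ∨ c.2 = d.2 + 1))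

lemma LAdj.symm {c d : ℤ × ℤ} (h : LAdj c d) : LAdj d c := by
  unfold LAdj at *; omega

/-- first square at an edge -/
def sq1 (c d : ℤ × ℤ) : ℤ × ℤ := (min c.1 d.1, min c.2 d.2)
/-- second square at an edge -/
def sq2 (c d : ℤ × ℤ) : ℤ × ℤ :=
  if c.2 = d.2 then (min c.1 d.1, min c.2 d.2 - 1) else (min c.1 d.1 - 1, min c.2 d.2)
/-- jump across an edge -/
def jump (h : ℤ × ℤ → ZMod 2) (c d : ℤ × ℤ) : ZMod 2 := h (sq1 c d) + h (sq2 c d)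

lemma jump_comm (h : ℤ × ℤ → ZMod 2) (c d : ℤ × ℤ) : jump h c d = jump h d c := by
  unfold jump sq1 sq2
  rw [min_comm c.1, min_comm c.2]
  by_cases e : c.2 = d.2
  · rw [if_pos e, if_pos e.symm]
  · rw [if_neg e, if_neg (Ne.symm e)]

/-- neighbours -/
def nb (c : ℤ × ℤ) : Finset (ℤ × ℤ) := {(c.1 + 1, c.2), (c.1 - 1, c.2), (c.1, c.2 + 1), (c.1, c.2 - 1)}

lemma mem_nb {c d : ℤ × ℤ} : d ∈ nb c ↔ LAdj c d := by
  obtain ⟨a, b⟩ := c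
  obtain ⟨a', b'⟩ := d
  simp only [nb, mem_insert, mem_singleton, Prod.mk.injEq, LAdj]
  omega

lemma vertex_sum (h : ℤ × ℤ → ZMod 2) (c : ℤ × ℤ) : ∑ d ∈ nb c, jump h c d = 0 := by
  obtain ⟨a, b⟩ := c
  unfold nb
  rw [sum_insert (by simp; omega), sum_insert (by simp), sum_insert (by simp; omega), sum_singleton]
  unfold jump sq1 sq2
  simp only [if_true]
  rw [if_neg (by omega), if_neg (by omega)]
  rw [min_eq_left (by omega : a ≤ a + 1), min_eq_right (by omega : a - 1 ≤ a), min_self, min_self,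
    min_eq_left (by omega : b ≤ b + 1), min_eq_right (by omega : b - 1 ≤ b)]
  have e : ∀ t : ZMod 2, t + t = 0 := CharTwo.add_self_eq_zero
  linear_combination e (h (a, b)) + e (h (a, b - 1)) + e (h (a - 1, b)) + e (h (a - 1, b - 1))

lemma bd_sum (h : ℤ × ℤ → ZMod 2) (B : Finset (ℤ × ℤ)) :
    ∑ c ∈ B, ∑ d ∈ (nb c).filter (· ∉ B), jump h c d = 0 := by
  have h1 : ∑ c ∈ B, ∑ d ∈ nb c, jump h c d = 0 := sum_eq_zero fun c _ => vertex_sum h c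
  have h2 : ∑ c ∈ B, ∑ d ∈ (nb c).filter (· ∈ B), jump h c d = 0 := by
    rw [Finset.sum_sigma']
    refine Finset.sum_involution (fun p _ => ⟨p.2, p.1⟩) ?_ ?_ ?_ ?_
    · rintro ⟨c, d⟩ _
      simp only
      rw [jump_comm h d c]; exact CharTwo.add_self_eq_zero _
    · rintro ⟨c, d⟩ hp _ heq
      simp only [mem_sigma, mem_filter, mem_nb] at hp
      have : d = c := congrArg Sigma.fst heq
      subst this
      have := hp.2.1
      unfold LAdj at this
      omega
    · rintro ⟨c, d⟩ hp
      simp only [mem_sigma, mem_filter, mem_nb] at hp ⊢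
      exact ⟨hp.2.2, hp.2.1.symm, hp.1⟩
    · rintro ⟨c, d⟩ _; rfl
  have h3 : ∑ c ∈ B, ∑ d ∈ nb c, jump h c d =
      ∑ c ∈ B, ∑ d ∈ (nb c).filter (· ∈ B), jump h c d +
      ∑ c ∈ B, ∑ d ∈ (nb c).filter (· ∉ B), jump h c d := by
    rw [← sum_add_distrib]
    exact sum_congr rfl fun c _ => (sum_filter_add_sum_filter_not _ _ _).symm
  rw [h1, h2, zero_add] at h3
  exact h3.symm

/-- ray function of a point -/
def qf (c s : ℤ × ℤ) : ZMod 2 := if c.2 = s.2 ∧ c.1 ≤ s.1 then 1 else 0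
/-- ray function of an edge -/
def wf (c d s : ℤ × ℤ) : ZMod 2 := if c.2 ≠ d.2 ∧ s.2 = min c.2 d.2 ∧ c.1 ≤ s.1 then 1 else 0
/-- horizontal part -/
def hz (c' d' c : ℤ × ℤ) : ZMod 2 := if c'.2 = d'.2 then qf c (sq1 c' d') else 0

lemma jump_wf (c d c' d' : ℤ × ℤ) (h : LAdj c d) (h' : LAdj c' d') :
    jump (wf c d) c' d' = (if (c' = c ∧ d' = d) ∨ (c' = d ∧ d' = c) then 1 else 0) +
      (hz c' d' c + hz c' d' d) := by
  obtain ⟨a, b⟩ := c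
  obtain ⟨a1, b1⟩ := d
  obtain ⟨a', b'⟩ := c'
  obtain ⟨a1', b1'⟩ := d'
  have e2 : (1 : ZMod 2) + 1 = 0 := by decide
  have m1 : ∀ t : ℤ, min t (t + 1) = t := fun t => min_eq_left (by omega)
  have m2 : ∀ t : ℤ, min (t + 1) t = t := fun t => min_eq_right (by omega)
  have m3 : ∀ t : ℤ, (t = t + 1) = False := fun t => by simp
  have m4 : ∀ t : ℤ, (t + 1 = t) = False := fun t => by simp
  simp only [LAdj] at h h'
  simp only [jump, wf, hz, qf, sq1, sq2, Prod.mk.injEq]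
  rcases h with ⟨rfl, rfl | rfl⟩ | ⟨rfl, rfl | rfl⟩ <;>
  rcases h' with ⟨rfl, rfl | rfl⟩ | ⟨rfl, rfl | rfl⟩ <;>
  simp only [m1, m2, m3, m4, min_self, if_true, if_false, ne_eq, not_true_eq_false, false_and,
    not_false_eq_true, true_and, add_zero] <;>
  split_ifs <;> first | omega | rfl

lemma walk_fun (S : Set (ℤ × ℤ)) (c d : ℤ × ℤ)
    (hw : Relation.ReflTransGen (fun c d => LAdj c d ∧ c ∈ S ∧ d ∈ S) c d) :
    ∃ h : ℤ × ℤ → ZMod 2, ∀ c' d', LAdj c' d' → ¬ (c' ∈ S ∧ d' ∈ S) →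
      jump h c' d' = hz c' d' c + hz c' d' d := by
  induction hw with
  | refl =>
    refine ⟨fun _ => 0, fun c' d' _ _ => ?_⟩
    rw [CharTwo.add_self_eq_zero]; simp [jump]
  | @tail d e h1 h2 ih =>
    obtain ⟨h, hh⟩ := ih
    refine ⟨fun s => h s + wf d e s, fun c' d' ha hn => ?_⟩
    have e1 := hh c' d' ha hn
    have e2 := jump_wf d e c' d' h2.1 ha
    rw [if_neg (by
      rintro (⟨rfl, rfl⟩ | ⟨rfl, rfl⟩)
      · exact hn h2.2
      · exact hn ⟨h2.2.2, h2.2.1⟩)] at e2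
    have e3 : hz c' d' d + hz c' d' d = 0 := CharTwo.add_self_eq_zero _
    unfold jump at *
    linear_combination e1 + e2 + e3

lemma lattice_bound {V E : Type*} [Fintype E] [Fintype V] [DecidableEq V]
    (tail head : E → V) (col : V → Bool)
    (hcol : ∀ e, col (tail e) ≠ col (head e))
    (hs : ∀ e e', (tail e = tail e' ∧ head e = head e') ∨ (tail e = head e' ∧ head e = tail e') →
      e = e')
    (hV : 3 ≤ Fintype.card V)
    (B : V → Finset (ℤ × ℤ)) (hd : ∀ v w c, c ∈ B v → c ∈ B w → v = w)
    (ρ : V → ℤ × ℤ)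
    (hconn : ∀ v, ∀ c ∈ B v,
      Relation.ReflTransGen (fun c d => LAdj c d ∧ c ∈ B v ∧ d ∈ B v) (ρ v) c)
    (x y : E → ℤ × ℤ) (hx : ∀ e, x e ∈ B (tail e)) (hy : ∀ e, y e ∈ B (head e))
    (hxy : ∀ e, LAdj (x e) (y e)) :
    Fintype.card E + 4 ≤ 2 * Fintype.card V := by
  classical
  have hne : ∀ e, tail e ≠ head e := fun e h => hcol e (by rw [h])
  let Del : ℤ × ℤ → ℤ × ℤ → Prop := fun c d => LAdj c d ∧ (¬ ∃ v, c ∈ B v ∧ d ∈ B v) ∧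
    ¬ ∃ e, (c = x e ∧ d = y e) ∨ (c = y e ∧ d = x e)
  let rel : ℤ × ℤ → ℤ × ℤ → Prop := fun p q => ∃ c d, Del c d ∧ p = sq1 c d ∧ q = sq2 c d
  have same : ∀ e e', (x e = x e' ∧ y e = y e') ∨ (x e = y e' ∧ y e = x e') → e = e' := by
    rintro e e' (⟨h1, h2⟩ | ⟨h1, h2⟩)
    · exact hs e e' (Or.inl ⟨hd _ _ _ (hx e) (h1 ▸ hx e'), hd _ _ _ (hy e) (h2 ▸ hy e')⟩)
    · exact hs e e' (Or.inr ⟨hd _ _ _ (hx e) (h1 ▸ hy e'), hd _ _ _ (hy e) (h2 ▸ hx e')⟩)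
  refine euler_count (F := Quot rel) tail head col hcol hs hV
    (fun e => Quot.mk _ (sq1 (x e) (y e))) (fun e => Quot.mk _ (sq2 (x e) (y e))) ?_ ?_
  · intro f
    let h : ℤ × ℤ → ZMod 2 := fun p => if (Quot.mk rel p) = f then 1 else 0
    have hdel : ∀ c d, Del c d → jump h c d = 0 := by
      intro c d hcd
      have : Quot.mk rel (sq1 c d) = Quot.mk rel (sq2 c d) := Quot.sound ⟨c, d, hcd, rfl, rfl⟩
      simp only [jump, h]
      rw [this]
      exact CharTwo.add_self_eq_zero _
    funext v
    change ∑ e, ((if tail e = v then jump h (x e) (y e) else 0) +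
      (if head e = v then jump h (x e) (y e) else 0)) = 0
    refine Eq.trans ?_ (bd_sum h (B v))
    rw [Finset.sum_sigma']
    have e1 : ∀ e, (if tail e = v then jump h (x e) (y e) else 0) +
      (if head e = v then jump h (x e) (y e) else 0) =
      if tail e = v ∨ head e = v then jump h (x e) (y e) else 0 := by
      intro e
      have := hne e
      split_ifs <;> first | (exfalso; grind) | simp
    simp only [e1]
    rw [← Finset.sum_filter]
    refine Finset.sum_of_injOn (fun e => if tail e = v then ⟨x e, y e⟩ else ⟨y e, x e⟩) ?_ ?_ ?_ ?_
    · intro e he e' he' heq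
      have he := (mem_filter.1 (mem_coe.1 he)).2
      have he' := (mem_filter.1 (mem_coe.1 he')).2
      apply same
      simp only at heq
      split_ifs at heq <;> simp only [Sigma.mk.injEq, heq_eq_eq] at heq <;> tauto
    · intro e he
      have he := (mem_filter.1 (mem_coe.1 he)).2
      simp only [mem_coe]
      split_ifs with ht
      · simp only [mem_sigma, mem_filter, mem_nb]
        subst ht
        exact ⟨hx e, hxy e, fun hc => hne e (hd _ _ _ hc (hy e))⟩
      · simp only [mem_sigma, mem_filter, mem_nb]
        have := he.resolve_left ht
        subst this
        exact ⟨hy e, (hxy e).symm, fun hc => ht (hd _ _ _ (hx e) hc)⟩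
    · rintro ⟨c, d⟩ hp hni
      simp only [mem_sigma, mem_filter, mem_nb] at hp
      apply hdel
      refine ⟨hp.2.1, ?_, ?_⟩
      · rintro ⟨w, hw1, hw2⟩
        obtain rfl := hd _ _ _ hp.1 hw1
        exact hp.2.2 hw2
      · rintro ⟨e, ⟨rfl, rfl⟩ | ⟨rfl, rfl⟩⟩
        · apply hni
          have ht := hd _ _ _ (hx e) hp.1
          exact ⟨e, by simp [ht], by simp [ht]⟩
        · apply hni
          have ht := hd _ _ _ (hy e) hp.1
          have ht' : tail e ≠ v := fun h => hne e (h.trans ht.symm)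
          exact ⟨e, by simp [ht], by simp [ht']⟩
    · intro e he
      split_ifs
      · rfl
      · exact jump_comm _ _ _
  · intro z hz0
    have hwx : ∀ e, ∃ h : ℤ × ℤ → ZMod 2, ∀ c' d', LAdj c' d' →
        (¬ ∃ v, c' ∈ B v ∧ d' ∈ B v) →
        jump h c' d' = (if (c' = x e ∧ d' = y e) ∨ (c' = y e ∧ d' = x e) then 1 else 0) +
          (hz c' d' (ρ (tail e)) + hz c' d' (ρ (head e))) := by
      intro e
      obtain ⟨h1, hh1⟩ := walk_fun (B (tail e)) _ _ (hconn (tail e) (x e) (hx e))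
      obtain ⟨h2, hh2⟩ := walk_fun (B (head e)) _ _ (hconn (head e) (y e) (hy e))
      refine ⟨fun s => h1 s + wf (x e) (y e) s + h2 s, fun c' d' ha hn => ?_⟩
      have e1 := hh1 c' d' ha (fun hc => hn ⟨_, hc⟩)
      have e2 := hh2 c' d' ha (fun hc => hn ⟨_, hc⟩)
      have e3 := jump_wf (x e) (y e) c' d' (hxy e) ha
      have e4 : hz c' d' (x e) + hz c' d' (x e) = 0 := CharTwo.add_self_eq_zero _
      have e5 : hz c' d' (y e) + hz c' d' (y e) = 0 := CharTwo.add_self_eq_zero _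
      unfold jump at *
      linear_combination e1 + e2 + e3 + e4 + e5
    choose k hk using hwx
    let h : ℤ × ℤ → ZMod 2 := fun s => ∑ e, z e * k e s
    have hj : ∀ c' d', LAdj c' d' → (¬ ∃ v, c' ∈ B v ∧ d' ∈ B v) →
        jump h c' d' = ∑ e, z e * (if (c' = x e ∧ d' = y e) ∨ (c' = y e ∧ d' = x e) then 1 else 0) := by
      intro c' d' ha hn
      have e1 : jump h c' d' = ∑ e, z e * jump (k e) c' d' := by
        simp only [jump, h, mul_add, sum_add_distrib]
      have e2 : ∑ e, z e * (hz c' d' (ρ (tail e)) + hz c' d' (ρ (head e))) = 0 := by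
        have e3 : ∑ v, hz c' d' (ρ v) * bdry tail head z v = 0 := by rw [hz0]; simp
        rw [← e3]
        change _ = ∑ v, hz c' d' (ρ v) * ∑ e, ((if tail e = v then z e else 0) +
          (if head e = v then z e else 0))
        simp only [mul_sum]
        rw [sum_comm]
        refine sum_congr rfl fun e _ => ?_
        simp only [mul_add, mul_ite, mul_zero, sum_add_distrib]
        simp [mul_comm]
      rw [e1]
      simp only [fun e => hk e c' d' ha hn]
      simp only [mul_add, sum_add_distrib] at e2 ⊢
      rw [e2, add_zero]
    refine ⟨Quot.lift h ?_, ?_⟩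
    · rintro p q ⟨c, d, hcd, rfl, rfl⟩
      have := hj c d hcd.1 hcd.2.1
      rw [sum_eq_zero] at this
      · unfold jump at this
        exact CharTwo.add_eq_zero.1 this
      · intro e _
        rw [if_neg (fun hc => hcd.2.2 ⟨e, hc⟩), mul_zero]
    · intro e
      have hn : ¬ ∃ v, x e ∈ B v ∧ y e ∈ B v := by
        rintro ⟨v, h1, h2⟩
        exact hne e ((hd _ _ _ (hx e) h1).trans (hd _ _ _ h2 (hy e)))
      have := hj (x e) (y e) (hxy e) hn
      rw [sum_eq_single e] at this
      · simp only [true_and, true_or, if_true, and_self, mul_one] at this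
        exact this.symm
      · intro e' _ hne'
        rw [if_neg, mul_zero]
        intro hc
        exact hne' (same e e' hc).symm
      · simp

end lattice

section topo
open Relation

def W (S : Set (ℤ × ℤ)) (c d : ℤ × ℤ) : Prop :=
  ReflTransGen (fun c d => LAdj c d ∧ c ∈ S ∧ d ∈ S) c d

lemma W.symm {S : Set (ℤ × ℤ)} {c d} (h : W S c d) : W S d c := by
  unfold W at *
  induction h with
  | refl => exact ReflTransGen.refl
  | tail _ b c => exact c.head ⟨b.1.symm, b.2.2, b.2.1⟩

lemma W.trans {S : Set (ℤ × ℤ)} {c d e} (h : W S c d) (h' : W S d e) : W S c e :=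
  ReflTransGen.trans h h'

lemma W.mono {S T : Set (ℤ × ℤ)} (hST : S ⊆ T) {c d} (h : W S c d) : W T c d :=
  ReflTransGen.mono (fun _ _ h => ⟨h.1, hST h.2.1, hST h.2.2⟩) _ _ h

lemma W.single {S : Set (ℤ × ℤ)} {c d} (h : LAdj c d) (hc : c ∈ S) (hd : d ∈ S) : W S c d :=
  ReflTransGen.single ⟨h, hc, hd⟩

def Nk (k : ℝ) (S : Set (ℝ × ℝ)) : Set (ℤ × ℤ) :=
  {c | ∃ s ∈ S, |(c.1 : ℝ) - k * s.1| < 1 ∧ |(c.2 : ℝ) - k * s.2| < 1}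

noncomputable def fl (k : ℝ) (s : ℝ × ℝ) : ℤ × ℤ := (⌊k * s.1⌋, ⌊k * s.2⌋)

lemma Nk_mono {k : ℝ} {S T : Set (ℝ × ℝ)} (h : S ⊆ T) : Nk k S ⊆ Nk k T := by
  rintro c ⟨s, hs, h1⟩
  exact ⟨s, h hs, h1⟩

lemma abs_floor (a : ℝ) : |((⌊a⌋ : ℤ) : ℝ) - a| < 1 := by
  have := Int.floor_le a
  have := Int.lt_floor_add_one a
  rw [abs_lt]; constructor <;> linarith

lemma fl_mem {k : ℝ} {S : Set (ℝ × ℝ)} {s} (hs : s ∈ S) : fl k s ∈ Nk k S :=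
  ⟨s, hs, abs_floor _, abs_floor _⟩

lemma near_floor (a : ℝ) (z : ℤ) (h : |(z : ℝ) - a| < 1) : z = ⌊a⌋ ∨ z = ⌊a⌋ + 1 := by
  rw [abs_lt] at h
  have h1 := Int.floor_le a
  have h2 := Int.lt_floor_add_one a
  have h3 : ((⌊a⌋ : ℤ) : ℝ) < ((z + 1 : ℤ) : ℝ) := by push_cast; linarith
  have h4 : (z : ℝ) < ((⌊a⌋ + 2 : ℤ) : ℝ) := by push_cast; linarith
  have h3' : ⌊a⌋ < z + 1 := by exact_mod_cast h3
  have h4' : z < ⌊a⌋ + 2 := by exact_mod_cast h4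
  omega

lemma W_point {k : ℝ} {s : ℝ × ℝ} {c} (hc : c ∈ Nk k {s}) : W (Nk k {s}) c (fl k s) := by
  obtain ⟨s', hs', h1, h2⟩ := hc
  rw [Set.mem_singleton_iff] at hs'
  subst hs'
  obtain ⟨c1, c2⟩ := c
  simp only at h1 h2
  have hm : ∀ z w : ℤ, |(z : ℝ) - k * s'.1| < 1 → |(w : ℝ) - k * s'.2| < 1 → (z, w) ∈ Nk k {s'} :=
    fun z w h h' => ⟨s', rfl, h, h'⟩
  have A : W (Nk k {s'}) (c1, c2) (⌊k * s'.1⌋, c2) := by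
    rcases near_floor _ _ h1 with h | h
    · rw [h]; exact ReflTransGen.refl
    · refine W.single ?_ (hm _ _ h1 h2) (hm _ _ (abs_floor _) h2)
      exact Or.inl ⟨rfl, Or.inr h⟩
  have B : W (Nk k {s'}) (⌊k * s'.1⌋, c2) (⌊k * s'.1⌋, ⌊k * s'.2⌋) := by
    rcases near_floor _ _ h2 with h | h
    · rw [h]; exact ReflTransGen.refl
    · refine W.single ?_ (hm _ _ (abs_floor _) h2) (hm _ _ (abs_floor _) (abs_floor _))
      exact Or.inr ⟨rfl, Or.inr h⟩
  exact A.trans B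

lemma W_fl {k : ℝ} {S : Set (ℝ × ℝ)} (hS : IsPreconnected S) {s t} (hs : s ∈ S) (ht : t ∈ S) :
    W (Nk k S) (fl k s) (fl k t) := by
  refine hS.induction₂ (fun s t => W (Nk k S) (fl k s) (fl k t)) ?_ ?_ ?_ hs ht
  · intro x hx
    have hopen : IsOpen {t : ℝ × ℝ | |((fl k x).1 : ℝ) - k * t.1| < 1 ∧ |((fl k x).2 : ℝ) - k * t.2| < 1} := by
      have a1 : Continuous fun t : ℝ × ℝ => |((fl k x).1 : ℝ) - k * t.1| := by fun_prop
      have a2 : Continuous fun t : ℝ × ℝ => |((fl k x).2 : ℝ) - k * t.2| := by fun_prop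
      exact (isOpen_lt a1 continuous_const).inter (isOpen_lt a2 continuous_const)
    have hx2 := hopen.mem_nhds (show x ∈ _ from ⟨abs_floor _, abs_floor _⟩)
    filter_upwards [nhdsWithin_le_nhds hx2, self_mem_nhdsWithin] with t ht htS
    exact (W_point (s := t) ⟨t, rfl, ht⟩).mono (Nk_mono (by simpa using htS))
  · intro x y z _ _ _ h h'
    exact h.trans h'
  · intro x y _ _ h
    exact h.symm

lemma W_Nk {k : ℝ} {S : Set (ℝ × ℝ)} (hS : IsPreconnected S) {c d} (hc : c ∈ Nk k S) (hd : d ∈ Nk k S) :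
    W (Nk k S) c d := by
  have key : ∀ c ∈ Nk k S, ∃ s ∈ S, W (Nk k S) c (fl k s) := by
    rintro c ⟨s, hs, h⟩
    exact ⟨s, hs, (W_point (s := s) ⟨s, rfl, h⟩).mono (Nk_mono (by simpa using hs))⟩
  obtain ⟨s, hs, h1⟩ := key c hc
  obtain ⟨t, ht, h2⟩ := key d hd
  exact (h1.trans (W_fl hS hs ht)).trans h2.symm

lemma Nk_finite {k : ℝ} (hk : 0 < k) {S : Set (ℝ × ℝ)} (hS : IsCompact S) : (Nk k S).Finite := by
  obtain ⟨R, hR⟩ := hS.isBounded.subset_closedBall 0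
  have : Nk k S ⊆ Set.Icc (-⌈k * R + 1⌉) ⌈k * R + 1⌉ ×ˢ Set.Icc (-⌈k * R + 1⌉) ⌈k * R + 1⌉ := by
    rintro ⟨c1, c2⟩ ⟨s, hs, h1, h2⟩
    have h := hR hs
    rw [mem_closedBall_zero_iff, Prod.norm_def, max_le_iff, Real.norm_eq_abs, Real.norm_eq_abs, abs_le, abs_le] at h
    simp only [abs_lt] at h1 h2
    have hc := Int.le_ceil (k * R + 1)
    have key : ∀ (c : ℤ) (x : ℝ), -R ≤ x → x ≤ R → -1 < (c : ℝ) - k * x → (c : ℝ) - k * x < 1 →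
        -⌈k * R + 1⌉ ≤ c ∧ c ≤ ⌈k * R + 1⌉ := by
      intro c x hx1 hx2 h1 h2
      have a1 : k * x ≤ k * R := by gcongr
      have a2 : k * (-R) ≤ k * x := by gcongr
      constructor
      · have : ((-⌈k * R + 1⌉ : ℤ) : ℝ) ≤ c := by push_cast; linarith
        exact_mod_cast this
      · have : (c : ℝ) ≤ ((⌈k * R + 1⌉ : ℤ) : ℝ) := by linarith
        exact_mod_cast this
    exact ⟨key _ _ h.1.1 h.1.2 h1.1 h1.2, key _ _ h.2.1 h.2.2 h2.1 h2.2⟩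
  exact ((Set.finite_Icc _ _).prod (Set.finite_Icc _ _)).subset this

lemma sep {ι : Type*} [Finite ι] (K : ι → Set (ℝ × ℝ)) (hK : ∀ i, IsCompact (K i)) :
    ∃ k : ℝ, 0 < k ∧ ∀ i j, Disjoint (K i) (K j) → Disjoint (Nk k (K i)) (Nk k (K j)) := by
  have h1 : ∀ i j, ∀ᶠ k : ℝ in Filter.atTop, Disjoint (K i) (K j) → Disjoint (Nk k (K i)) (Nk k (K j)) := by
    intro i j
    by_cases hd : Disjoint (K i) (K j)
    swap
    · exact Filter.Eventually.of_forall fun k h => absurd h hd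
    obtain ⟨δ, hδ, h⟩ := hd.exists_thickenings (hK i) (hK j).isClosed
    filter_upwards [Filter.eventually_ge_atTop (1 / δ), Filter.eventually_gt_atTop 0] with k hk hk0 _
    rw [Set.disjoint_left]
    rintro c ⟨s, hs, h1, h2⟩ ⟨t, ht, h3, h4⟩
    have hkd : 1 ≤ k * δ := by rwa [div_le_iff₀ hδ] at hk
    have key : ∀ S : Set (ℝ × ℝ), ∀ s ∈ S, |(c.1 : ℝ) - k * s.1| < 1 → |(c.2 : ℝ) - k * s.2| < 1 →
        ((c.1 : ℝ) / k, (c.2 : ℝ) / k) ∈ Metric.thickening δ S := by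
      intro S s hs h1 h2
      rw [Metric.mem_thickening_iff]
      refine ⟨s, hs, ?_⟩
      have q : ∀ z x : ℝ, |z - k * x| < 1 → |z / k - x| < δ := by
        intro z x h
        have : z / k - x = (z - k * x) / k := by field_simp
        rw [this, abs_div, abs_of_pos hk0, div_lt_iff₀ hk0]
        nlinarith
      rw [Prod.dist_eq, max_lt_iff, Real.dist_eq, Real.dist_eq]
      exact ⟨q _ _ h1, q _ _ h2⟩
    exact Set.disjoint_left.1 h (key _ s hs h1 h2) (key _ t ht h3 h4)
  have h2 : ∀ᶠ k : ℝ in Filter.atTop, ∀ i j, Disjoint (K i) (K j) → Disjoint (Nk k (K i)) (Nk k (K j)) := by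
    rw [Filter.eventually_all]; intro i
    rw [Filter.eventually_all]; exact h1 i
  obtain ⟨k, hk, hk0⟩ := (h2.and (Filter.eventually_gt_atTop 0)).exists
  exact ⟨k, hk0, hk⟩

/-- Extraction of the last part of a walk after leaving `A`. -/
lemma extract {M A : Set (ℤ × ℤ)} {c d : ℤ × ℤ} (hd : d ∉ A) (h : W M c d) (hc : c ∈ A) :
    ∃ x y, x ∈ A ∧ y ∈ M \ A ∧ LAdj x y ∧ W (M \ A) y d := by
  have : (∃ x y, x ∈ A ∧ y ∈ M \ A ∧ LAdj x y ∧ W (M \ A) y d) ∨ (c ∉ A ∧ W (M \ A) c d) := by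
    clear hc
    unfold W at h
    induction h using ReflTransGen.head_induction_on with
    | refl => exact Or.inr ⟨hd, ReflTransGen.refl⟩
    | head h' h ih =>
      rename_i a b
      rcases ih with ih | ih
      · exact Or.inl ih
      · by_cases ha : a ∈ A
        · exact Or.inl ⟨a, b, ha, ⟨h'.2.2, ih.1⟩, h'.1, ih.2⟩
        · exact Or.inr ⟨ha, (W.single (S := M \ A) h'.1 ⟨h'.2.1, ha⟩ ⟨h'.2.2, ih.1⟩).trans ih.2⟩
  rcases this with h | h
  · exact h
  · exact absurd hc h.1

lemma W_self {S : Set (ℤ × ℤ)} {c d : ℤ × ℤ} (h : W S c d) : W {x | x ∈ S ∧ W S x d} c d := by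
  unfold W at h
  induction h using ReflTransGen.head_induction_on with
  | refl => exact ReflTransGen.refl
  | head h' h ih =>
    rename_i a b
    refine W.trans (W.single h'.1 ⟨h'.2.1, ?_⟩ ⟨h'.2.2, h⟩) ih
    exact W.trans (W.single h'.1 h'.2.1 h'.2.2) h

lemma region_bound {V E : Type*} [Fintype E] [Fintype V] [DecidableEq V] (tail head : E → V)
    (col : V → Bool) (hcol : ∀ e, col (tail e) ≠ col (head e))
    (hs : ∀ e e', (tail e = tail e' ∧ head e = head e') ∨ (tail e = head e' ∧ head e = tail e') →
      e = e')
    (hV : 3 ≤ Fintype.card V) (A : V → Set (ℝ × ℝ)) (M : E → Set (ℝ × ℝ))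
    (hAc : ∀ v, IsCompact (A v)) (hMc : ∀ e, IsCompact (M e))
    (hAp : ∀ v, IsPreconnected (A v)) (hMp : ∀ e, IsPreconnected (M e))
    (p : V → ℝ × ℝ) (hp : ∀ v, p v ∈ A v)
    (q r : E → ℝ × ℝ) (hqM : ∀ e, q e ∈ M e) (hrM : ∀ e, r e ∈ M e)
    (hqA : ∀ e, q e ∈ A (tail e)) (hrA : ∀ e, r e ∈ A (head e))
    (hAA : ∀ v w, v ≠ w → Disjoint (A v) (A w))
    (hMA : ∀ e w, w ≠ tail e → w ≠ head e → Disjoint (M e) (A w))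
    (hMM : ∀ e e', head e ≠ head e' → Disjoint (M e) (M e')) :
    Fintype.card E + 4 ≤ 2 * Fintype.card V := by
  classical
  obtain ⟨k, hk, hsep⟩ := sep (fun i : V ⊕ E => Sum.elim A M i) (by rintro (v | e); exacts [hAc v, hMc e])
  have hAA' : ∀ v w, v ≠ w → Disjoint (Nk k (A v)) (Nk k (A w)) :=
    fun v w h => hsep (.inl v) (.inl w) (hAA v w h)
  have hMA' : ∀ e w, w ≠ tail e → w ≠ head e → Disjoint (Nk k (M e)) (Nk k (A w)) :=
    fun e w h h' => hsep (.inr e) (.inl w) (hMA e w h h')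
  have hMM' : ∀ e e', head e ≠ head e' → Disjoint (Nk k (M e)) (Nk k (M e')) :=
    fun e e' h => hsep (.inr e) (.inr e') (hMM e e' h)
  have hth : ∀ e, tail e ≠ head e := fun e h => hcol e (by rw [h])
  let D : E → Set (ℤ × ℤ) := fun e => Nk k (M e) \ Nk k (A (tail e))
  let T : E → Set (ℤ × ℤ) := fun e => {c | c ∈ D e ∧ W (D e) c (fl k (r e))}
  have hrd : ∀ e, fl k (r e) ∉ Nk k (A (tail e)) := fun e h =>
    Set.disjoint_left.1 (hAA' _ _ (hth e)) h (fl_mem (hrA e))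
  have hex : ∀ e, ∃ x y, x ∈ Nk k (A (tail e)) ∧ y ∈ D e ∧ LAdj x y ∧ W (D e) y (fl k (r e)) := by
    intro e
    exact extract (hrd e) (W_Nk (hMp e) (fl_mem (hqM e)) (fl_mem (hrM e))) (fl_mem (hqA e))
  choose x y hx hyD hxy hyW using hex
  let B : V → Set (ℤ × ℤ) := fun v => Nk k (A v) ∪ ⋃ e ∈ {e | head e = v}, T e
  have hBf : ∀ v, (B v).Finite := by
    intro v
    refine (Nk_finite hk (hAc v)).union ?_
    refine Set.Finite.biUnion (Set.toFinite _) fun e _ => ?_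
    exact (Nk_finite hk (hMc e)).subset fun c hc => hc.1.1
  have hTA : ∀ e w c, c ∈ T e → c ∈ Nk k (A w) → w = head e := by
    intro e w c h1 h2
    by_contra hne
    by_cases ht : w = tail e
    · subst ht; exact h1.1.2 h2
    · exact Set.disjoint_left.1 (hMA' e w ht hne) h1.1.1 h2
  refine lattice_bound tail head col hcol hs hV (fun v => (hBf v).toFinset) ?_ (fun v => fl k (p v)) ?_
    x y ?_ ?_ hxy
  · intro v w c hv hw
    simp only [Set.Finite.mem_toFinset] at hv hw
    rcases hv with hv | hv <;> rcases hw with hw | hw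
    · by_contra h
      exact Set.disjoint_left.1 (hAA' v w h) hv hw
    · simp only [Set.mem_iUnion, exists_prop] at hw
      obtain ⟨e, he, hw⟩ := hw
      rw [← he]; exact hTA e v c hw hv
    · simp only [Set.mem_iUnion, exists_prop] at hv
      obtain ⟨e, he, hv⟩ := hv
      rw [← he]; exact (hTA e w c hv hw).symm
    · simp only [Set.mem_iUnion, exists_prop] at hv hw
      obtain ⟨e, he, hv⟩ := hv
      obtain ⟨e', he', hw⟩ := hw
      rw [← he, ← he']
      by_contra h
      exact Set.disjoint_left.1 (hMM' e e' h) hv.1.1 hw.1.1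
  · intro v c hc
    simp only [Set.Finite.mem_toFinset] at hc ⊢
    change W (B v) (fl k (p v)) c
    have hA : ∀ c ∈ Nk k (A v), W (B v) (fl k (p v)) c := fun c hc =>
      (W_Nk (hAp v) (fl_mem (hp v)) hc).mono Set.subset_union_left
    rcases hc with hc | hc
    · exact hA c hc
    · simp only [Set.mem_iUnion, exists_prop] at hc
      obtain ⟨e, he, hc⟩ := hc
      have h1 : W (B v) c (fl k (r e)) := by
        refine (W_self hc.2).mono ?_
        refine Set.Subset.trans ?_ Set.subset_union_right
        exact Set.subset_biUnion_of_mem (u := T) he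
      refine (hA (fl k (r e)) (fl_mem ?_)).trans h1.symm
      have he' : head e = v := he
      rw [← he']; exact hrA e
  · intro e
    simp only [Set.Finite.mem_toFinset]
    exact Or.inl (hx e)
  · intro e
    simp only [Set.Finite.mem_toFinset]
    exact Or.inr (Set.mem_biUnion (show e ∈ {e' | head e' = head e} from rfl) ⟨hyD e, hyW e⟩)

lemma planar_bound {V : Type*} [Fintype V] (G : SimpleGraph V) (hG : IsPlanar G) (col : V → Bool)
    (hcol : ∀ u v, G.Adj u v → col u ≠ col v) (hV : 3 ≤ Fintype.card V) :
    Nat.card G.edgeSet + 4 ≤ 2 * Fintype.card V := by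
  classical
  obtain ⟨f, γ, hf, hγc, hγe, hγi, hγf, hγγ⟩ := hG
  choose tail head hth h0 h1 using hγe
  let g : G.edgeSet → ℝ → ℝ × ℝ := fun e t => γ e (Set.projIcc 0 1 zero_le_one t)
  have hgc : ∀ e, Continuous (g e) := fun e => (hγc e).comp continuous_projIcc
  have gv : ∀ e t (ht : t ∈ Set.Icc (0 : ℝ) 1), g e t = γ e ⟨t, ht⟩ := by
    intro e t ht
    simp only [g, Set.projIcc_of_mem zero_le_one ht]
  have g0 : ∀ e, g e 0 = f (tail e) := fun e => (gv e 0 (by norm_num)).trans (h0 e)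
  have g1 : ∀ e, g e 1 = f (head e) := fun e => (gv e 1 (by norm_num)).trans (h1 e)
  have gi : ∀ e s t, s ∈ Set.Icc (0 : ℝ) 1 → t ∈ Set.Icc (0 : ℝ) 1 → g e s = g e t → s = t := by
    intro e s t hs ht h
    rw [gv e s hs, gv e t ht] at h
    exact congrArg Subtype.val (hγi e h)
  have gf : ∀ e t v, t ∈ Set.Icc (0 : ℝ) 1 → g e t = f v → (t = 0 ∧ v = tail e) ∨ (t = 1 ∧ v = head e) := by
    intro e t v ht h
    by_cases ht0 : t = 0
    · subst ht0; rw [g0] at h; exact Or.inl ⟨rfl, (hf h).symm⟩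
    by_cases ht1 : t = 1
    · subst ht1; rw [g1] at h; exact Or.inr ⟨rfl, (hf h).symm⟩
    rw [gv e t ht] at h
    exact absurd h (hγf e ⟨t, ht⟩ ht0 ht1 v)
  have gg : ∀ e e' s t, s ∈ Set.Icc (0 : ℝ) 1 → t ∈ Set.Icc (0 : ℝ) 1 → e ≠ e' → g e s = g e' t →
      ∃ v, g e s = f v ∧ g e' t = f v := by
    intro e e' s t hs ht hne h
    have h' := h
    rw [gv e s hs, gv e' t ht] at h
    obtain ⟨v, hv⟩ := hγγ e e' hne ⟨s, hs⟩ ⟨t, ht⟩ h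
    rw [← gv e s hs] at hv
    exact ⟨v, hv.symm, by rw [← h', hv]⟩
  have hI1 : ∀ t ∈ Set.Icc (0 : ℝ) (1/2), t ∈ Set.Icc (0 : ℝ) 1 := fun t ht => ⟨ht.1, by linarith [ht.2]⟩
  have hI2 : ∀ t ∈ Set.Icc (1/2 : ℝ) 1, t ∈ Set.Icc (0 : ℝ) 1 := fun t ht => ⟨by linarith [ht.1], ht.2⟩
  have hadj : ∀ e, G.Adj (tail e) (head e) := by
    intro e
    have := e.2
    rw [hth e] at this
    exact this
  have hne : ∀ e, tail e ≠ head e := fun e => (hadj e).ne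
  let A : V → Set (ℝ × ℝ) := fun v => {f v} ∪ ⋃ e ∈ {e | tail e = v}, g e '' Set.Icc 0 (1/2)
  let M : G.edgeSet → Set (ℝ × ℝ) := fun e => g e '' Set.Icc (1/2) 1
  have memA : ∀ v z, z ∈ A v → z = f v ∨ ∃ e t, tail e = v ∧ t ∈ Set.Icc (0 : ℝ) (1/2) ∧ t ≠ 0 ∧ z = g e t := by
    intro v z hz
    rcases hz with hz | hz
    · exact Or.inl hz
    · simp only [Set.mem_iUnion, exists_prop] at hz
      obtain ⟨e, he, t, ht, rfl⟩ := hz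
      by_cases ht0 : t = 0
      · subst ht0
        left; rw [g0]; exact congrArg f he
      · exact Or.inr ⟨e, t, he, ht, ht0, rfl⟩
  have main := region_bound tail head col (fun e => hcol _ _ (hadj e)) ?_ hV A M ?_ ?_ ?_ ?_ f ?_
    (fun e => g e (1/2)) (fun e => g e 1) ?_ ?_ ?_ ?_ ?_ ?_ ?_
  · rw [Nat.card_eq_fintype_card]; exact main
  · intro e e' h
    apply Subtype.ext
    rw [hth e, hth e']
    rcases h with ⟨a, b⟩ | ⟨a, b⟩
    · rw [a, b]
    · rw [a, b]; exact Sym2.eq_swap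
  · intro v
    exact isCompact_singleton.union ((Set.toFinite _).isCompact_biUnion
      fun e _ => isCompact_Icc.image (hgc e))
  · intro e
    exact isCompact_Icc.image (hgc e)
  · intro v
    have : A v = ⋃₀ ({{f v}} ∪ (fun e => g e '' Set.Icc 0 (1/2)) '' {e | tail e = v}) := by
      rw [Set.sUnion_union, Set.sUnion_singleton, Set.sUnion_image]
    rw [this]
    apply isPreconnected_sUnion (f v)
    · rintro s (hs | ⟨e, he, rfl⟩)
      · rw [Set.mem_singleton_iff] at hs; rw [hs]; rfl
      · refine ⟨0, by norm_num, ?_⟩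
        rw [g0]; exact congrArg f he
    · rintro s (hs | ⟨e, he, rfl⟩)
      · rw [Set.mem_singleton_iff] at hs; rw [hs]; exact isPreconnected_singleton
      · exact isPreconnected_Icc.image _ (hgc e).continuousOn
  · intro e
    exact isPreconnected_Icc.image _ (hgc e).continuousOn
  · intro v; exact Or.inl rfl
  · intro e; exact ⟨1/2, by norm_num, rfl⟩
  · intro e; exact ⟨1, by norm_num, rfl⟩
  · intro e
    exact Or.inr (Set.mem_biUnion (show e ∈ {e' | tail e' = tail e} from rfl) ⟨1/2, by norm_num, rfl⟩)
  · intro e; exact Or.inl (g1 e)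
  · intro v w hvw
    rw [Set.disjoint_left]
    intro z hz hw
    rcases memA v z hz with rfl | ⟨e, t, he, ht, ht0, rfl⟩
    · rcases memA w _ hw with h | ⟨e', t', he', ht', ht0', h⟩
      · exact hvw (hf h)
      · rcases gf e' t' v (hI1 _ ht') h.symm with h | h
        · exact ht0' h.1
        · have := ht'.2; rw [h.1] at this; norm_num at this
    · rcases memA w _ hw with h | ⟨e', t', he', ht', ht0', h⟩
      · rcases gf e t w (hI1 _ ht) h with h | h
        · exact ht0 h.1
        · have := ht.2; rw [h.1] at this; norm_num at this
      · have hee : e ≠ e' := by rintro rfl; exact hvw (he.symm.trans he')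
        obtain ⟨u, hu, _⟩ := gg e e' t t' (hI1 _ ht) (hI1 _ ht') hee h
        rcases gf e t u (hI1 _ ht) hu with h | h
        · exact ht0 h.1
        · have := ht.2; rw [h.1] at this; norm_num at this
  · intro e w hw1 hw2
    rw [Set.disjoint_left]
    rintro z ⟨s, hs, rfl⟩ hw
    rcases memA w _ hw with h | ⟨e', t', he', ht', ht0', h⟩
    · rcases gf e s w (hI2 _ hs) h with h | h
      · exact hw1 h.2
      · exact hw2 h.2
    · have hee : e ≠ e' := by rintro rfl; exact hw1 he'.symm
      obtain ⟨u, _, hu⟩ := gg e e' s t' (hI2 _ hs) (hI1 _ ht') hee h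
      rcases gf e' t' u (hI1 _ ht') hu with h | h
      · exact ht0' h.1
      · have := ht'.2; rw [h.1] at this; norm_num at this
  · intro e e' hh
    rw [Set.disjoint_left]
    rintro z ⟨s, hs, rfl⟩ ⟨t, ht, h⟩
    have hee : e' ≠ e := by rintro rfl; exact hh rfl
    obtain ⟨u, hu', hu⟩ := gg e' e t s (hI2 _ ht) (hI2 _ hs) hee h
    rcases gf e s u (hI2 _ hs) hu with h | h
    · have := hs.1; rw [h.1] at this; norm_num at this
    · rcases gf e' t u (hI2 _ ht) hu' with h' | h'
      · have := ht.1; rw [h'.1] at this; norm_num at this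
      · exact hh (h.2.symm.trans h'.2)

end topo

lemma planar_comap {V W : Type*} (H : SimpleGraph W) (φ : V → W) (hφ : Function.Injective φ)
    (hH : IsPlanar H) : IsPlanar (H.comap φ) := by
  obtain ⟨f, γ, hf, hγc, hγe, hγi, hγf, hγγ⟩ := hH
  have hE : ∀ e : (H.comap φ).edgeSet, Sym2.map φ e.1 ∈ H.edgeSet := by
    rintro ⟨e, he⟩
    induction e using Sym2.ind with
    | _ a b => exact he
  let E : (H.comap φ).edgeSet → H.edgeSet := fun e => ⟨Sym2.map φ e.1, hE e⟩
  have hEi : Function.Injective E := by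
    intro e e' h
    exact Subtype.ext (Sym2.map.injective hφ (congrArg Subtype.val h))
  refine ⟨f ∘ φ, fun e => γ (E e), hf.comp hφ, fun e => hγc _, ?_, fun e => hγi _,
    fun e t h0 h1 v => hγf _ t h0 h1 _, ?_⟩
  · intro e
    obtain ⟨u, v, huv, h0, h1⟩ := hγe (E e)
    obtain ⟨⟨a, b⟩, hab⟩ := Quot.exists_rep e.1
    change s(a, b) = e.1 at hab
    have h2 : (E e : Sym2 W) = s(φ a, φ b) := by
      change Sym2.map φ e.1 = _
      rw [← hab]; rfl
    rw [h2] at huv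
    rcases Sym2.eq_iff.1 huv with ⟨h3, h4⟩ | ⟨h3, h4⟩
    · exact ⟨a, b, hab.symm, h0.trans (congrArg f h3.symm), h1.trans (congrArg f h4.symm)⟩
    · exact ⟨b, a, by rw [← hab]; exact Sym2.eq_swap, h0.trans (congrArg f h4.symm), h1.trans (congrArg f h3.symm)⟩
  · intro e e' hne s t h
    obtain ⟨w, hw⟩ := hγγ (E e) (E e') (fun h => hne (hEi h)) s t h
    have ends : ∀ (e : (H.comap φ).edgeSet) (s : Set.Icc (0:ℝ) 1), γ (E e) s = f w →
        w ∈ Set.range φ := by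
      intro e s hw
      have hs : (s : ℝ) = 0 ∨ (s : ℝ) = 1 := by
        by_contra hc
        rw [not_or] at hc
        exact hγf (E e) s hc.1 hc.2 w hw
      obtain ⟨u, v, huv, h0, h1⟩ := hγe (E e)
      have hin : ∀ x, x ∈ (E e : Sym2 W) → x ∈ Set.range φ := by
        intro x hx
        obtain ⟨a, _, ha⟩ := Sym2.mem_map.1 hx
        exact ⟨a, ha⟩
      rcases hs with hs | hs
      · have : s = ⟨0, by norm_num⟩ := Subtype.ext hs
        rw [this, h0] at hw
        rw [← hf hw]; apply hin; rw [huv]; exact Sym2.mem_mk_left _ _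
      · have : s = ⟨1, by norm_num⟩ := Subtype.ext hs
        rw [this, h1] at hw
        rw [← hf hw]; apply hin; rw [huv]; exact Sym2.mem_mk_right _ _
    obtain ⟨a, ha⟩ := ends e s hw.symm
    refine ⟨a, ?_⟩
    exact (congrArg f ha).trans hw

def emb (n m : ℕ) (h : m ≤ n) : Fin m ⊕ Fin m → VT n
  | .inl a => ⟨1, (Fin.castLE h a : Fin n)⟩
  | .inr a => ⟨2, (Fin.castLE h a : Fin n)⟩

lemma emb_inj (n m : ℕ) (h : m ≤ n) : Function.Injective (emb n m h) := by
  have key : ∀ (i : Fin 3) (a b : (![Fin 1, Fin n, Fin n] : Fin 3 → Type) i),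
      (⟨i, a⟩ : VT n) = ⟨i, b⟩ → a = b := by
    intro i a b h
    simpa using h
  rintro (a | a) (b | b) hab
  · exact congrArg Sum.inl (Fin.castLE_injective h (key 1 _ _ hab))
  · have := congrArg Sigma.fst hab
    change (1 : Fin 3) = 2 at this
    simp at this
  · have := congrArg Sigma.fst hab
    change (2 : Fin 3) = 1 at this
    simp at this
  · exact congrArg Sum.inr (Fin.castLE_injective h (key 2 _ _ hab))

lemma lower (n m k : ℕ) (hm : m ≤ n) (hm3 : 2 ≤ m) (H : Fin k → SimpleGraph (VT n))
    (hH : ∀ i, IsPlanar (H i))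
    (hU : (⨆ i, H i) = completeMultipartiteGraph ![Fin 1, Fin n, Fin n]) :
    m * m ≤ k * (4 * m - 4) := by
  classical
  let G : Fin k → SimpleGraph (Fin m ⊕ Fin m) := fun i => (H i).comap (emb n m hm)
  have hle : ∀ i x y, (H i).Adj x y → x.1 ≠ y.1 := by
    intro i x y h
    have h2 : (⨆ i, H i).Adj x y := SimpleGraph.iSup_adj.2 ⟨i, h⟩
    rw [hU] at h2
    exact h2
  have hb : ∀ i, Nat.card (G i).edgeSet ≤ 4 * m - 4 := by
    intro i
    have := planar_bound (G i) (planar_comap (H i) _ (emb_inj n m hm) (hH i)) Sum.isLeft ?_ ?_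
    · simp only [Fintype.card_sum, Fintype.card_fin] at this
      omega
    · rintro (a | a) (b | b) h
      · exact absurd rfl (hle i (emb n m hm (.inl a)) (emb n m hm (.inl b)) h)
      · simp
      · simp
      · exact absurd rfl (hle i (emb n m hm (.inr a)) (emb n m hm (.inr b)) h)
    · simp only [Fintype.card_sum, Fintype.card_fin]; omega
  have hex : ∀ ab : Fin m × Fin m, ∃ i, (G i).Adj (.inl ab.1) (.inr ab.2) := by
    intro ab
    have h2 : (⨆ i, H i).Adj (emb n m hm (.inl ab.1)) (emb n m hm (.inr ab.2)) := by
      rw [hU]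
      change (1 : Fin 3) ≠ 2
      decide
    obtain ⟨i, hi⟩ := SimpleGraph.iSup_adj.1 h2
    exact ⟨i, hi⟩
  choose c hc using hex
  let F : Fin m × Fin m → Σ i, (G i).edgeSet := fun ab => ⟨c ab, s(.inl ab.1, .inr ab.2), hc ab⟩
  have hF : Function.Injective F := by
    intro x y h
    have h2 : (s(.inl x.1, .inr x.2) : Sym2 (Fin m ⊕ Fin m)) = s(.inl y.1, .inr y.2) :=
      congrArg (fun z : Σ i, (G i).edgeSet => (z.2 : Sym2 (Fin m ⊕ Fin m))) h
    simp at h2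
    exact Prod.ext h2.1 h2.2
  have h3 := Fintype.card_le_of_injective F hF
  rw [Fintype.card_sigma] at h3
  simp only [Fintype.card_prod, Fintype.card_fin] at h3
  refine h3.trans ?_
  calc _ ≤ ∑ i : Fin k, (4 * m - 4) := Finset.sum_le_sum fun i _ => by
        have := hb i
        rwa [Nat.card_eq_fintype_card] at this
    _ = _ := by simp

lemma final (n p : ℕ) (hp : 1 ≤ p) (h1 : n ≤ 4 * p) (h2 : 4 * p ≤ n + 1) :
    thickness (completeMultipartiteGraph ![Fin 1, Fin n, Fin n]) = p + 1 := by
  apply le_antisymm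
  · exact Nat.sInf_le (upper n p h1)
  · refine le_csInf ⟨p + 1, upper n p h1⟩ ?_
    rintro k ⟨H, -, hH, hU⟩
    by_contra hk
    have hk' : k ≤ p := by omega
    obtain ⟨q, rfl⟩ : ∃ q, p = q + 1 := ⟨p - 1, by omega⟩
    have := lower n (4 * q + 3) k (by omega) (by omega) H hH hU
    have h4 : 4 * (4 * q + 3) - 4 = 16 * q + 8 := by omega
    rw [h4] at this
    have h5 : k * (16 * q + 8) ≤ (q + 1) * (16 * q + 8) := Nat.mul_le_mul_right _ hk'
    nlinarith

end ThickAux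

theorem thickness_K1nn_of_mod (n : ℕ) (hn : 1 ≤ n) (h : n % 4 = 0 ∨ n % 4 = 3) :
    (thickness (completeMultipartiteGraph ![Fin 1, Fin n, Fin n]) : ℤ) = ⌈((n : ℚ) + 2) / 4⌉ := by
  obtain ⟨p, hp, h1⟩ : ∃ p, 1 ≤ p ∧ (n = 4 * p ∨ n + 1 = 4 * p) :=
    ⟨(n + 1) / 4, by omega, by omega⟩
  rw [ThickAux.final n p hp (by omega) (by omega)]
  symm
  rw [Int.ceil_eq_iff]
  push_cast
  rcases h1 with h1 | h1
  · have : (n : ℚ) = 4 * p := by exact_mod_cast h1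
    constructor <;> linarith
  · have : (n : ℚ) + 1 = 4 * p := by exact_mod_cast h1
    constructor <;> linarith
end
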